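/- arXiv:2207.06575 — 3 statements merged into one kernel-verified Lean document; each statement's English description precedes it below -/
import Mathlib

section
/- Let p be a prime and F a finite extension of ℚ_p, with fixed algebraic closure Ω. Let |M(4)| be the number of intermediate fields F ⊆ L ⊆ Ω with [L:F] = 4, and let |Ab(4)| be the number of such L that are abelian Galois extensions of F. Then |M(4)| = |Ab(4)| + 4·ν(F,D₈) + 4·ν(F,A₄) + 4·ν(F,S₄), where D₈ denotes the dihedral group of order 8 (a 2-Sylow subgroup of S₄). -/
/-- `nu F G` is the number of intermediate fields `K` of a fixed algebraic closure of `F`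
such that `K/F` is a finite Galois extension with Galois group isomorphic to `G`. -/
noncomputable def nu (F : Type*) [Field F] (G : Type*) [Group G] : ℕ :=
  Nat.card {K : IntermediateField F (AlgebraicClosure F) //
    FiniteDimensional F K ∧ IsGalois F K ∧ Nonempty ((K ≃ₐ[F] K) ≃* G)}

open Topology in
/-- In a finite extension of `ℚ_p`, there are finitely many classes modulo `n`-th powers. -/
lemma exists_power_reps (p : ℕ) [Fact p.Prime] (K : Type*) [Field K] [Algebra ℚ_[p] K]
    [FiniteDimensional ℚ_[p] K] (n : ℕ) (hn : n ≠ 0) :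
    ∃ S : Set K, S.Finite ∧ ∀ x : K, ∃ s ∈ S, ∃ y : K, y ≠ 0 ∧ x = s * y ^ n := by
  let : NontriviallyNormedField K := spectralNorm.nontriviallyNormedField ℚ_[p] K
  let : NormedAlgebra ℚ_[p] K := spectralNorm.normedAlgebra ℚ_[p] K
  have : ProperSpace K := FiniteDimensional.proper ℚ_[p] K
  have : CompleteSpace K := inferInstance
  have : CharZero K := 
    charZero_of_injective_algebraMap (algebraMap ℚ_[p] K).injective
  have hd : HasStrictDerivAt (fun x : K => x ^ n) ((n : K) * 1 ^ (n - 1)) 1 := hasStrictDerivAt_pow n 1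
  have hne : (n : K) * 1 ^ (n - 1) ≠ 0 := by simpa using hn
  have hmap := hd.map_nhds_eq hne
  have hU : {z : K | ∃ y : K, y ≠ 0 ∧ z = y ^ n} ∈ 𝓝 (1 : K) := by
    have h1 : {y : K | y ≠ 0} ∈ 𝓝 (1 : K) := isOpen_ne.mem_nhds one_ne_zero
    have h2 := Filter.image_mem_map (m := fun x : K => x ^ n) h1
    rw [hmap] at h2
    simp only [one_pow] at h2
    refine Filter.mem_of_superset h2 ?_
    rintro _ ⟨y, hy, rfl⟩
    exact ⟨y, hy, rfl⟩
  obtain ⟨c, hc⟩ := NormedField.exists_one_lt_norm K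
  have hc0 : c ≠ 0 := by rintro rfl; simp at hc; linarith
  have hcn : 1 < ‖c ^ n‖ := by rw [norm_pow]; exact one_lt_pow₀ hc hn
  let A : Set K := Metric.closedBall 0 ‖c ^ n‖ \ Metric.ball 0 1
  have hA : IsCompact A := (isCompact_closedBall _ _).diff Metric.isOpen_ball
  have hA0 : ∀ a ∈ A, a ≠ 0 := by
    rintro a ⟨_, h⟩ rfl; simp at h
  let V : K → Set K := fun a => {z | ∃ y : K, y ≠ 0 ∧ z = a * y ^ n}
  have hV : ∀ a ∈ A, V a ∈ 𝓝 a := by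
    intro a ha
    have ht : Filter.Tendsto (fun z : K => a⁻¹ * z) (𝓝 a) (𝓝 1) := by
      have : Filter.Tendsto (fun z : K => a⁻¹ * z) (𝓝 a) (𝓝 (a⁻¹ * a)) :=
        (continuous_const.mul continuous_id).tendsto a
      rwa [inv_mul_cancel₀ (hA0 a ha)] at this
    filter_upwards [ht hU] with z hz
    obtain ⟨y, hy, h⟩ := hz
    exact ⟨y, hy, by rw [← h, mul_inv_cancel_left₀ (hA0 a ha)]⟩
  obtain ⟨t, ht, hcov⟩ := hA.elim_nhds_subcover V hV
  refine ⟨insert 0 (t : Set K), t.finite_toSet.insert 0, fun x => ?_⟩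
  by_cases hx : x = 0
  · exact ⟨0, Set.mem_insert _ _, 1, one_ne_zero, by simp [hx]⟩
  obtain ⟨m, hm1, hm2⟩ := exists_mem_Ico_zpow (norm_pos_iff.2 hx) hcn
  have hcz : (0 : ℝ) < ‖c ^ n‖ ^ m := zpow_pos (by linarith) m
  have hxA : x * ((c ^ m)⁻¹) ^ n ∈ A := by
    have hnorm : ‖x * ((c ^ m)⁻¹) ^ n‖ = ‖x‖ / ‖c ^ n‖ ^ m := by
      rw [norm_mul, norm_pow, norm_inv, norm_zpow, norm_pow, div_eq_mul_inv, inv_pow,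
        ← zpow_natCast, ← zpow_mul, ← zpow_natCast, ← zpow_mul, mul_comm m]
    refine ⟨?_, ?_⟩
    · rw [mem_closedBall_zero_iff, hnorm, div_le_iff₀ hcz]
      rw [zpow_add_one₀ (by linarith : ‖c ^ n‖ ≠ 0)] at hm2
      linarith
    · rw [mem_ball_zero_iff, hnorm, not_lt, le_div_iff₀ hcz]
      linarith
  have := hcov hxA
  simp only [Set.mem_iUnion] at this
  obtain ⟨s, hs, y, hy, h⟩ := this
  refine ⟨s, Set.mem_insert_of_mem _ hs, y * c ^ m, mul_ne_zero hy (zpow_ne_zero _ hc0), ?_⟩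
  rw [mul_pow, ← mul_assoc, ← h, inv_pow, inv_mul_cancel_right₀]
  exact pow_ne_zero _ (zpow_ne_zero _ hc0)

/-- Finite-dimensionality is preserved by adjoining all `n`-th roots. -/
lemma exists_root_step (p : ℕ) [Fact p.Prime] (F : Type*) [Field F] [Algebra ℚ_[p] F]
    [FiniteDimensional ℚ_[p] F] (E : IntermediateField F (AlgebraicClosure F))
    [FiniteDimensional F E] (n : ℕ) (hn : n ≠ 0) :
    ∃ E' : IntermediateField F (AlgebraicClosure F), FiniteDimensional F E' ∧ E ≤ E' ∧
      ∀ x, x ^ n ∈ E → x ∈ E' := by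
  have : FiniteDimensional ℚ_[p] E := FiniteDimensional.trans ℚ_[p] F E
  obtain ⟨S, hS, hrep⟩ := exists_power_reps p E n hn
  let T : Set (AlgebraicClosure F) := ⋃ s ∈ S, {x | x ^ n = (s : AlgebraicClosure F)}
  have hT : T.Finite := by
    refine hS.biUnion fun s _ => ?_
    classical
    refine (Polynomial.nthRoots n (s : AlgebraicClosure F)).toFinset.finite_toSet.subset ?_
    intro x hx
    simpa [Polynomial.mem_nthRoots (Nat.pos_of_ne_zero hn)] using hx
  have : Finite T := hT
  have : FiniteDimensional F (IntermediateField.adjoin F T) :=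
    IntermediateField.finiteDimensional_adjoin fun x _ => Algebra.IsIntegral.isIntegral x
  refine ⟨E ⊔ IntermediateField.adjoin F T, inferInstance, le_sup_left, fun x hx => ?_⟩
  obtain ⟨s, hs, y, hy, h⟩ := hrep ⟨x ^ n, hx⟩
  have h' : x ^ n = (s : AlgebraicClosure F) * (y : AlgebraicClosure F) ^ n := by
    simpa using congrArg Subtype.val h
  have hy' : (y : AlgebraicClosure F) ≠ 0 := by simpa using hy
  have h1 : x / y ∈ T := by
    simp only [T, Set.mem_iUnion]
    exact ⟨s, hs, by simp [div_pow, h', hy']⟩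
  have h2 : x / y ∈ E ⊔ IntermediateField.adjoin F T :=
    (le_sup_right : _ ≤ E ⊔ IntermediateField.adjoin F T) (IntermediateField.subset_adjoin F T h1)
  have h3 : (y : AlgebraicClosure F) ∈ E ⊔ IntermediateField.adjoin F T :=
    (le_sup_left : E ≤ E ⊔ IntermediateField.adjoin F T) y.2
  have := mul_mem h2 h3
  rwa [div_mul_cancel₀ _ hy'] at this

lemma exists_chain (p : ℕ) [Fact p.Prime] (F : Type*) [Field F] [Algebra ℚ_[p] F]
    [FiniteDimensional ℚ_[p] F] :
    ∃ f : ℕ → IntermediateField F (AlgebraicClosure F), (∀ n, FiniteDimensional F (f n)) ∧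
      (∀ n, f n ≤ f (n + 1)) ∧ (∀ n x, x ^ 2 ∈ f n → x ∈ f (n + 1)) ∧
      (∀ n x, x ^ 3 ∈ f n → x ∈ f (n + 1)) := by
  have step : ∀ E : {E : IntermediateField F (AlgebraicClosure F) // FiniteDimensional F E},
      ∃ E' : {E : IntermediateField F (AlgebraicClosure F) // FiniteDimensional F E},
        E.1 ≤ E'.1 ∧ (∀ x, x ^ 2 ∈ E.1 → x ∈ E'.1) ∧ (∀ x, x ^ 3 ∈ E.1 → x ∈ E'.1) := by
    rintro ⟨E, hE⟩
    obtain ⟨A, hA, h1, h2⟩ := exists_root_step p F E 2 (by norm_num)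
    obtain ⟨B, hB, h3, h4⟩ := exists_root_step p F A 3 (by norm_num)
    exact ⟨⟨B, hB⟩, h1.trans h3, fun x hx => h3 (h2 x hx), fun x hx => h4 x (h1 hx)⟩
  choose g hg using step
  let f : ℕ → {E : IntermediateField F (AlgebraicClosure F) // FiniteDimensional F E} :=
    fun n => Nat.rec ⟨⊥, inferInstance⟩ (fun _ E => g E) n
  exact ⟨fun n => (f n).1, fun n => (f n).2, fun n => (hg (f n)).1,
    fun n => (hg (f n)).2.1, fun n => (hg (f n)).2.2⟩

section radicals
variable {F Ω : Type*} [Field F] [Field Ω] [Algebra F Ω] [CharZero Ω]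
  (f : ℕ → IntermediateField F Ω)

lemma quad_mem (h2 : ∀ n x, x ^ 2 ∈ f n → x ∈ f (n + 1)) (hm : ∀ n, f n ≤ f (n + 1))
    (n : ℕ) (a b x : Ω) (ha : a ∈ f n) (hb : b ∈ f n) (hx : x ^ 2 + a * x + b = 0) :
    x ∈ f (n + 1) := by
  have hk : ∀ k : ℕ, (k : Ω) ∈ f n := fun k => natCast_mem _ k
  have hk2 : (2 : Ω) ∈ f n := by exact_mod_cast hk 2
  have h1 : x + a / 2 ∈ f (n + 1) := by
    apply h2
    have : (x + a / 2) ^ 2 = (a / 2) ^ 2 - b := by linear_combination hx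
    rw [this]
    exact sub_mem (pow_mem (div_mem ha hk2) 2) hb
  have := sub_mem h1 (hm n (div_mem ha hk2))
  simpa using this

lemma cubic_mem [IsAlgClosed Ω]
    (h2 : ∀ n x, x ^ 2 ∈ f n → x ∈ f (n + 1)) (h3 : ∀ n x, x ^ 3 ∈ f n → x ∈ f (n + 1))
    (hm : ∀ n, f n ≤ f (n + 1))
    (n : ℕ) (a b c x : Ω) (ha : a ∈ f n) (hb : b ∈ f n) (hc : c ∈ f n)
    (hx : x ^ 3 + a * x ^ 2 + b * x + c = 0) :
    x ∈ f (n + 2) := by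
  have hk : ∀ k : ℕ, (k : Ω) ∈ f n := fun k => natCast_mem _ k
  have hk2 : (2 : Ω) ∈ f n := by exact_mod_cast hk 2
  have hk3 : (3 : Ω) ∈ f n := by exact_mod_cast hk 3
  have hk27 : (27 : Ω) ∈ f n := by exact_mod_cast hk 27
  -- depress
  obtain ⟨P, hP⟩ : ∃ P, P = b - a ^ 2 / 3 := ⟨_, rfl⟩
  obtain ⟨Q, hQ⟩ : ∃ Q, Q = 2 * a ^ 3 / 27 - a * b / 3 + c := ⟨_, rfl⟩
  have hPm : P ∈ f n := hP ▸ sub_mem hb (div_mem (pow_mem ha 2) hk3)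
  have hQm : Q ∈ f n :=
    hQ ▸ add_mem (sub_mem (div_mem (mul_mem hk2 (pow_mem ha 3)) hk27)
      (div_mem (mul_mem ha hb) hk3)) hc
  obtain ⟨y, hy⟩ : ∃ y, y = x + a / 3 := ⟨_, rfl⟩
  have hy3 : y ^ 3 + P * y + Q = 0 := by
    rw [hy, hP, hQ]; linear_combination hx
  obtain ⟨z, hz⟩ : ∃ z : Ω, z ^ 2 - y * z - P / 3 = 0 := by
    obtain ⟨s, hs⟩ := IsAlgClosed.exists_pow_nat_eq (y ^ 2 / 4 + P / 3) (n := 2) (by norm_num)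
    exact ⟨y / 2 + s, by linear_combination hs⟩
  have hw : (z ^ 3) ^ 2 + Q * z ^ 3 + (- P ^ 3 / 27) = 0 := by
    have e : P = 3 * (z ^ 2 - y * z) := by linear_combination (-3) * hz
    have e2 : Q = - y ^ 3 - P * y := by linear_combination hy3
    rw [e2, e]; ring
  have hwm : z ^ 3 ∈ f (n + 1) := quad_mem f h2 hm n _ _ _ hQm
    (div_mem (neg_mem (pow_mem hPm 3)) hk27) hw
  have hzm : z ∈ f (n + 2) := h3 _ _ hwm
  have hvm : y - z ∈ f (n + 2) := by
    apply h3
    have : (y - z) ^ 3 = - Q - z ^ 3 := by linear_combination hy3 + 3 * y * hz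
    rw [this]
    exact sub_mem (hm _ (neg_mem hQm)) hwm
  have := sub_mem (add_mem hvm hzm) (hm _ (hm _ (div_mem ha hk3)))
  rw [hy] at this
  simpa using this

lemma quartic_mem [IsAlgClosed Ω]
    (h2 : ∀ n x, x ^ 2 ∈ f n → x ∈ f (n + 1)) (h3 : ∀ n x, x ^ 3 ∈ f n → x ∈ f (n + 1))
    (hm : ∀ n, f n ≤ f (n + 1))
    (n : ℕ) (a b c d x : Ω) (ha : a ∈ f n) (hb : b ∈ f n) (hc : c ∈ f n) (hd : d ∈ f n)
    (hx : x ^ 4 + a * x ^ 3 + b * x ^ 2 + c * x + d = 0) :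
    x ∈ f (n + 4) := by
  have hk : ∀ k : ℕ, (k : Ω) ∈ f n := fun k => natCast_mem _ k
  have hk2 : (2 : Ω) ∈ f n := by exact_mod_cast hk 2
  have hk3 : (3 : Ω) ∈ f n := by exact_mod_cast hk 3
  have hk4 : (4 : Ω) ∈ f n := by exact_mod_cast hk 4
  have hk8 : (8 : Ω) ∈ f n := by exact_mod_cast hk 8
  have hk16 : (16 : Ω) ∈ f n := by exact_mod_cast hk 16
  have hk256 : (256 : Ω) ∈ f n := by exact_mod_cast hk 256
  obtain ⟨P, hP⟩ : ∃ P, P = b - 3 * a ^ 2 / 8 := ⟨_, rfl⟩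
  obtain ⟨Q, hQ⟩ : ∃ Q, Q = a ^ 3 / 8 - a * b / 2 + c := ⟨_, rfl⟩
  obtain ⟨R, hR⟩ : ∃ R, R = - 3 * a ^ 4 / 256 + a ^ 2 * b / 16 - a * c / 4 + d := ⟨_, rfl⟩
  have hPm : P ∈ f n := hP ▸ sub_mem hb (div_mem (mul_mem hk3 (pow_mem ha 2)) hk8)
  have hQm : Q ∈ f n :=
    hQ ▸ add_mem (sub_mem (div_mem (pow_mem ha 3) hk8) (div_mem (mul_mem ha hb) hk2)) hc
  have hRm : R ∈ f n :=
    hR ▸ add_mem (sub_mem (add_mem (div_mem (mul_mem (neg_mem hk3) (pow_mem ha 4)) hk256)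
      (div_mem (mul_mem (pow_mem ha 2) hb) hk16)) (div_mem (mul_mem ha hc) hk4)) hd
  obtain ⟨y, hy⟩ : ∃ y, y = x + a / 4 := ⟨_, rfl⟩
  have hy4 : y ^ 4 + P * y ^ 2 + Q * y + R = 0 := by
    rw [hy, hP, hQ, hR]; linear_combination hx
  suffices hym : y ∈ f (n + 4) by
    have := sub_mem hym (hm _ (hm _ (hm _ (hm _ (div_mem ha hk4)))))
    rw [hy] at this
    simpa using this
  obtain ⟨t, ht⟩ : ∃ t : Ω, t ^ 3 + (2 * P) * t ^ 2 + (P ^ 2 - 4 * R) * t + (- Q ^ 2) = 0 := by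
    have hdeg : (Polynomial.X ^ 3 + Polynomial.C (2 * P) * Polynomial.X ^ 2 +
        Polynomial.C (P ^ 2 - 4 * R) * Polynomial.X + Polynomial.C (- Q ^ 2)).degree = 3 := by
      have := Polynomial.degree_cubic (a := (1 : Ω)) (b := 2 * P) (c := P ^ 2 - 4 * R)
        (d := - Q ^ 2) one_ne_zero
      simpa using this
    obtain ⟨t, ht⟩ := IsAlgClosed.exists_root _ (by rw [hdeg]; norm_num)
    exact ⟨t, by simpa [Polynomial.IsRoot] using ht⟩
  have htm : t ∈ f (n + 2) := cubic_mem f h2 h3 hm n _ _ _ t (mul_mem hk2 hPm)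
    (sub_mem (pow_mem hPm 2) (mul_mem hk4 hRm)) (neg_mem (pow_mem hQm 2)) ht
  obtain ⟨s, hs⟩ := IsAlgClosed.exists_pow_nat_eq t (n := 2) (by norm_num)
  have hsm : s ∈ f (n + 3) := h2 _ _ (by rwa [hs])
  have hP3 : P ∈ f (n + 3) := hm _ (hm _ (hm _ hPm))
  have hQ3 : Q ∈ f (n + 3) := hm _ (hm _ (hm _ hQm))
  have hk23 : (2 : Ω) ∈ f (n + 3) := hm _ (hm _ (hm _ hk2))
  by_cases hs0 : s = 0
  · have ht0 : t = 0 := by rw [← hs, hs0]; norm_num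
    have hQ0 : Q = 0 := by
      rw [ht0] at ht; simpa using ht
    have : y ^ 2 ∈ f (n + 1) := quad_mem f h2 hm n P R _ hPm hRm (by
      rw [hQ0] at hy4; linear_combination hy4)
    exact hm _ (hm _ (h2 _ _ this))
  · obtain ⟨q, hq⟩ : ∃ q, q = Q / s := ⟨_, rfl⟩
    have hqm : q ∈ f (n + 3) := hq ▸ div_mem hQ3 hsm
    have hqs : Q = q * s := by rw [hq]; field_simp
    have hR4 : R = (P + s ^ 2 - q) / 2 * ((P + s ^ 2 + q) / 2) := by
      have h0 : s ^ 2 * (((P + s ^ 2) ^ 2 - q ^ 2) - 4 * R) = 0 := by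
        rw [← hs, hqs] at ht; linear_combination ht
      have := (mul_eq_zero.1 h0).resolve_left (pow_ne_zero 2 hs0)
      linear_combination (-1 / 4) * this
    have hfac : (y ^ 2 + s * y + (P + s ^ 2 - q) / 2) *
        (y ^ 2 + (-s) * y + (P + s ^ 2 + q) / 2) = 0 := by
      rw [hqs, hR4] at hy4
      linear_combination hy4
    rcases mul_eq_zero.1 hfac with h | h
    · exact quad_mem f h2 hm _ _ _ y hsm
        (div_mem (sub_mem (add_mem hP3 (pow_mem hsm 2)) hqm) hk23) h
    · exact quad_mem f h2 hm _ _ _ y (neg_mem hsm)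
        (div_mem (add_mem (add_mem hP3 (pow_mem hsm 2)) hqm) hk23) h

end radicals

/-- A `p`-adic field has only finitely many quartic extensions. -/
lemma finite_quartic (p : ℕ) [Fact p.Prime] (F : Type*) [Field F] [Algebra ℚ_[p] F]
    [FiniteDimensional ℚ_[p] F] :
    Finite {L : IntermediateField F (AlgebraicClosure F) // Module.finrank F L = 4} := by
  have : CharZero F := charZero_of_injective_algebraMap (algebraMap ℚ_[p] F).injective
  have : CharZero (AlgebraicClosure F) :=
    charZero_of_injective_algebraMap (algebraMap F (AlgebraicClosure F)).injective
  obtain ⟨f, hfd, hm, h2, h3⟩ := exists_chain p F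
  have := hfd 4
  have hle : ∀ L : IntermediateField F (AlgebraicClosure F), Module.finrank F L = 4 →
      L ≤ f 4 := by
    intro L hL x hx
    have : FiniteDimensional F L := FiniteDimensional.of_finrank_pos (by omega)
    obtain ⟨P, hP⟩ : ∃ P, P = (Algebra.lmul F L ⟨x, hx⟩).charpoly := ⟨_, rfl⟩
    have hmon : P.Monic := hP ▸ LinearMap.charpoly_monic _
    have hdeg : P.natDegree = 4 := by rw [hP, LinearMap.charpoly_natDegree, hL]
    have h0 : Polynomial.aeval (⟨x, hx⟩ : L) P = 0 := by
      have h1 := LinearMap.aeval_self_charpoly (Algebra.lmul F L ⟨x, hx⟩)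
      rw [← hP, Polynomial.aeval_algHom_apply] at h1
      have h2 := congrArg (fun g => g 1) h1
      simpa using h2
    have h1 : Polynomial.aeval x P = 0 := by
      have h2 := congrArg (algebraMap L (AlgebraicClosure F)) h0
      rw [← Polynomial.aeval_algebraMap_apply, map_zero] at h2
      exact h2
    have hc4 : P.coeff 4 = 1 := by rw [← hdeg]; exact hmon
    rw [Polynomial.aeval_eq_sum_range, hdeg] at h1
    simp only [Finset.sum_range_succ, Finset.sum_range_zero, hc4, Algebra.smul_def, map_one] at h1
    exact quartic_mem f h2 h3 hm 0 _ _ _ _ x ((f 0).algebraMap_mem (P.coeff 3))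
      ((f 0).algebraMap_mem (P.coeff 2)) ((f 0).algebraMap_mem (P.coeff 1))
      ((f 0).algebraMap_mem (P.coeff 0)) (by linear_combination h1)
  have hfin : Finite (IntermediateField F (f 4)) :=
    (Field.exists_primitive_element_iff_finite_intermediateField F (f 4)).1
      ⟨inferInstance, Field.exists_primitive_element F (f 4)⟩ 
  refine Finite.of_injective
    (fun L => IntermediateField.restrict (hle L.1 L.2) : _ → IntermediateField F (f 4)) ?_
  intro L L' h
  have := congrArg IntermediateField.lift h
  simp only [IntermediateField.lift_restrict] at this
  exact Subtype.ext this

/-- Index-four subgroups with trivial core. -/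
def CF {G : Type*} [Group G] (H : Subgroup G) : Prop :=
  H.index = 4 ∧ ∀ h : G, (∀ g : G, g * h * g⁻¹ ∈ H) → h = 1

lemma CF.map {G G' : Type*} [Group G] [Group G'] (e : G ≃* G') {H : Subgroup G} (h : CF H) :
    CF (H.map e.toMonoidHom) := by
  refine ⟨?_, fun x hx => ?_⟩
  · rw [← h.1]
    exact Subgroup.index_map_of_bijective e.bijective H
  · have := h.2 (e.symm x) (fun g => by
      obtain ⟨y, hy, hy'⟩ := hx (e g)
      have : y = g * e.symm x * g⁻¹ := by
        apply e.injective
        simpa using hy'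
      rwa [← this])
    simpa using this

lemma card_CF_congr {G G' : Type*} [Group G] [Group G'] (e : G ≃* G') :
    Nat.card {H : Subgroup G // CF H} = Nat.card {H : Subgroup G' // CF H} := by
  refine Nat.card_congr
    { toFun := fun H => ⟨H.1.map e.toMonoidHom, H.2.map e⟩
      invFun := fun H => ⟨H.1.map e.symm.toMonoidHom, H.2.map e.symm⟩
      left_inv := fun H => ?_
      right_inv := fun H => ?_ }
  · apply Subtype.ext
    ext x; simp [Subgroup.mem_map]
  · apply Subtype.ext
    ext x; simp [Subgroup.mem_map]

/-- the dihedral group of order 8 acting on the square -/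
def dihPerm : DihedralGroup 4 → Equiv.Perm (ZMod 4)
  | .r i => Equiv.addRight i
  | .sr i => Equiv.subLeft (-i)

lemma exists_dih_embed : ∃ φ : DihedralGroup 4 →* Equiv.Perm (Fin 4), Function.Injective φ := by
  have hinj : Function.Injective dihPerm := by
    intro a b h
    have h0 := congrArg (fun s => s 0) h
    have h1 := congrArg (fun s => s 1) h
    rcases a with i | i <;> rcases b with j | j <;> revert i j <;> simp [dihPerm] <;> decide
  refine ⟨(MonoidHom.mk' dihPerm ?_ : DihedralGroup 4 →* Equiv.Perm (ZMod 4)), hinj⟩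
  rintro (i | i) (j | j) <;> ext x <;> simp [dihPerm] <;> ring_nf

lemma classify {G : Type*} [Group G] [Finite G] (H : Subgroup G) (hH : CF H) :
    Nat.card G = 4 ∨ Nonempty (G ≃* DihedralGroup 4) ∨ Nonempty (G ≃* alternatingGroup (Fin 4)) ∨
      Nonempty (G ≃* Equiv.Perm (Fin 4)) := by
  have hcard : Nat.card (G ⧸ H) = 4 := hH.1
  let e : G ⧸ H ≃ Fin 4 := Nat.equivFinOfCardPos (by omega) |>.trans (finCongr hcard)
  let φ : G →* Equiv.Perm (Fin 4) :=
    (e.permCongrHom.toMonoidHom).comp (MulAction.toPermHom G (G ⧸ H))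
  have hφ : Function.Injective φ := by
    refine (injective_iff_map_eq_one φ).2 fun h hh => hH.2 h fun g => ?_
    have h1 : MulAction.toPermHom G (G ⧸ H) h = 1 := by
      apply e.permCongrHom.injective
      rw [map_one]; exact hh
    have h2 := congrArg (fun s => s ((g⁻¹ : G) : G ⧸ H)) h1
    simp only [MulAction.toPermHom_apply, MulAction.toPerm_apply, Equiv.Perm.coe_one, id] at h2
    have h3 : ((h * g⁻¹ : G) : G ⧸ H) = ((g⁻¹ : G) : G ⧸ H) := h2
    rw [eq_comm, QuotientGroup.eq] at h3
    simpa [mul_assoc] using h3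
  let eG : G ≃* φ.range := MonoidHom.ofInjective hφ
  have hc : Nat.card φ.range = Nat.card G := (Nat.card_congr eG.toEquiv).symm
  have h24 : Nat.card (Equiv.Perm (Fin 4)) = 24 := by
    simp [Nat.card_eq_fintype_card, Fintype.card_perm, Nat.factorial]
  have hd : Nat.card G ∣ 24 := by
    rw [← hc, ← h24]; exact Subgroup.card_subgroup_dvd_card _
  have h4 : 4 ∣ Nat.card G := hH.1 ▸ H.index_dvd_card
  have hidx := φ.range.card_mul_index
  rw [hc, h24] at hidx
  obtain ⟨k, hk⟩ := h4
  have hk6 : k ≤ 6 := by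
    have := Nat.le_of_dvd (by norm_num) hd; omega
  rw [hk] at hd hidx
  interval_cases k
  · omega
  · left; omega
  · right; left
    have hr8 : Nat.card φ.range = 8 := by omega
    obtain ⟨ψ, hψ⟩ := exists_dih_embed
    let eD : DihedralGroup 4 ≃* ψ.range := MonoidHom.ofInjective hψ
    have hD : Nat.card ψ.range = 8 := by
      rw [← Nat.card_congr eD.toEquiv]; rw [DihedralGroup.nat_card]
    have hf : 2 ^ (Nat.card (Equiv.Perm (Fin 4))).factorization 2 = 8 := by
      have h3 : (24 : ℕ).factorization 2 = 3 := by
        rw [Nat.factorization_def _ Nat.prime_two]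
        have : Fact (Nat.Prime 2) := ⟨Nat.prime_two⟩
        rw [show (24 : ℕ) = 2 ^ 3 * 3 by norm_num, padicValNat.mul (by norm_num) (by norm_num),
          padicValNat.prime_pow, padicValNat.eq_zero_of_not_dvd (by norm_num)]
      rw [h24, h3]; norm_num
    have : Fact (Nat.Prime 2) := ⟨Nat.prime_two⟩
    let P : Sylow 2 (Equiv.Perm (Fin 4)) := Sylow.ofCard φ.range (hr8.trans hf.symm)
    let Q : Sylow 2 (Equiv.Perm (Fin 4)) := Sylow.ofCard ψ.range (hD.trans hf.symm)
    exact ⟨eG.trans ((P.equiv Q : φ.range ≃* ψ.range).trans eD.symm)⟩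
  · right; right; left
    have : φ.range = alternatingGroup (Fin 4) :=
      Equiv.Perm.eq_alternatingGroup_of_index_eq_two (by omega)
    exact ⟨eG.trans (MulEquiv.subgroupCongr this)⟩
  · omega
  · omega
  · right; right; right
    have : φ.range = ⊤ := Subgroup.index_eq_one.1 (by omega)
    exact ⟨eG.trans ((MulEquiv.subgroupCongr this).trans Subgroup.topEquiv)⟩

lemma card_CF_dih : Nat.card {H : Subgroup (DihedralGroup 4) // CF H} = 4 := by
  have key : ∀ i : ZMod 4, ∀ x : DihedralGroup 4,
      x ∈ Subgroup.zpowers (DihedralGroup.sr i) ↔ x = 1 ∨ x = DihedralGroup.sr i := by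
    intro i x
    rw [mem_zpowers_iff_mem_range_orderOf, DihedralGroup.orderOf_sr]
    simp [Finset.range_add_one, or_comm]
  have hCF : ∀ i : ZMod 4, CF (Subgroup.zpowers (DihedralGroup.sr i)) := by
    intro i
    constructor
    · have h1 := (Subgroup.zpowers (DihedralGroup.sr i)).card_mul_index
      rw [Nat.card_zpowers, DihedralGroup.orderOf_sr, DihedralGroup.nat_card] at h1
      omega
    · intro h hh
      simp only [key] at hh
      revert h i
      decide
  let f : ZMod 4 → {H : Subgroup (DihedralGroup 4) // CF H} := fun i => ⟨_, hCF i⟩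
  have hf : Function.Bijective f := by
    constructor
    · intro i j h
      have h1 : DihedralGroup.sr i ∈ Subgroup.zpowers (DihedralGroup.sr j) := by
        have := congrArg Subtype.val h
        simp only [f] at this
        rw [← this]; exact Subgroup.mem_zpowers _
      rw [key] at h1
      rcases h1 with h1 | h1
      · cases h1
      · simpa using h1
    · rintro ⟨H, h4, hc⟩
      have h2 : Nat.card H = 2 := by
        have h1 := H.card_mul_index
        rw [h4, DihedralGroup.nat_card] at h1
        omega
      have h3 : ∃ i, DihedralGroup.sr i ∈ H := by
        by_contra hno
        push Not at hno
        have : ∀ x ∈ H, x = 1 := by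
          intro x hx
          apply hc
          have hx2 : x ^ 2 = 1 := by
            have := pow_card_eq_one' (x := (⟨x, hx⟩ : H))
            rw [h2] at this
            simpa using congrArg Subtype.val this
          rcases x with i | i
          · have : ∀ i : ZMod 4, (DihedralGroup.r i) ^ 2 = 1 → ∀ g : DihedralGroup 4,
              g * DihedralGroup.r i * g⁻¹ = DihedralGroup.r i := by decide
            intro g
            rw [this i hx2 g]; exact hx
          · exact absurd hx (hno i)
        have hb : H = ⊥ := (Subgroup.eq_bot_iff_forall H).2 this
        rw [hb] at h2
        simp at h2
      obtain ⟨i, hi⟩ := h3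
      refine ⟨i, Subtype.ext ?_⟩
      apply Subgroup.eq_of_le_of_card_ge
      · exact Subgroup.zpowers_le.2 hi
      · rw [h2, Nat.card_zpowers, DihedralGroup.orderOf_sr]
  rw [← Nat.card_congr (Equiv.ofBijective f hf)]
  simp

/-- Point stabilizers. -/
lemma card_CF_perm_aux (A : Subgroup (Equiv.Perm (Fin 4)))
    (hA : ∀ i j : Fin 4, ∃ g ∈ A, g i = j) (m : ℕ) (hm : m * 4 = Nat.card A)
    (h6 : m = 3 ∨ m = 6) : Nat.card {H : Subgroup A // CF H} = 4 := by
  have htr : MulAction.IsPretransitive A (Fin 4) := ⟨fun i j => by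
    obtain ⟨g, hg, h⟩ := hA i j
    exact ⟨⟨g, hg⟩, h⟩⟩
  have hidx : ∀ i : Fin 4, (MulAction.stabilizer A i).index = 4 := by
    intro i
    rw [MulAction.index_stabilizer_of_transitive]; simp
  have hCF : ∀ i : Fin 4, CF (MulAction.stabilizer A i) := by
    intro i
    refine ⟨hidx i, fun h hh => ?_⟩
    apply Subtype.ext
    ext j : 1
    obtain ⟨g, hg⟩ := MulAction.exists_smul_eq A j i
    have h1 := hh g
    rw [MulAction.mem_stabilizer_iff, ← hg] at h1
    have h2 : h • j = j := by
      simpa [mul_smul] using h1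
    exact h2
  have hcardH : ∀ H : Subgroup A, H.index = 4 → Nat.card H = m := by
    intro H h
    have := H.card_mul_index
    rw [h] at this; omega
  have key : ∀ c : Equiv.Perm (Fin 4), c ^ 3 = 1 → c ≠ 1 → ∃ i, c i = i ∧ ∀ j, c j = j → j = i := by
    decide
  have hle : ∀ H : Subgroup A, H.index = 4 → ∃ i : Fin 4, H ≤ MulAction.stabilizer A i ∧
      ∀ j : Fin 4, H ≤ MulAction.stabilizer A j → j = i := by
    intro H hH
    have hHm := hcardH H hH
    have : Fact (Nat.Prime 3) := ⟨Nat.prime_three⟩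
    obtain ⟨c, hc⟩ := exists_prime_orderOf_dvd_card' (G := H) 3 (by rw [hHm]; omega)
    have hc3 : ((c : A) : Equiv.Perm (Fin 4)) ^ 3 = 1 := by
      have : c ^ 3 = 1 := by rw [← hc]; exact pow_orderOf_eq_one c
      simpa using congrArg (fun x : H => ((x : A) : Equiv.Perm (Fin 4))) this
    have hc1 : ((c : A) : Equiv.Perm (Fin 4)) ≠ 1 := by
      intro h
      have : c = 1 := Subtype.ext (Subtype.ext h)
      rw [this] at hc; simp at hc
    obtain ⟨i, hi, hu⟩ := key _ hc3 hc1
    refine ⟨i, fun t ht => ?_, fun j hj => hu j (hj c.2)⟩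
    have hnorm : (Subgroup.zpowers c).Normal := by
      have h1 := (Subgroup.zpowers c).card_mul_index
      rw [Nat.card_zpowers, hc, hHm] at h1
      rcases h6 with h6 | h6
      · have : (Subgroup.zpowers c) = ⊤ := Subgroup.index_eq_one.1 (by omega)
        rw [this]; infer_instance
      · exact Subgroup.normal_of_index_eq_two (by omega)
    have h1 := hnorm.conj_mem' c (Subgroup.mem_zpowers c) ⟨t, ht⟩
    obtain ⟨k, hk⟩ := Subgroup.mem_zpowers_iff.1 h1
    have hci : c ∈ MulAction.stabilizer H i := hi
    have hki : c ^ k ∈ MulAction.stabilizer H i := zpow_mem hci k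
    rw [hk, MulAction.mem_stabilizer_iff, mul_smul, mul_smul, inv_smul_eq_iff] at hki
    exact hu _ hki
  let f : Fin 4 → {H : Subgroup A // CF H} := fun i => ⟨_, hCF i⟩
  have hf : Function.Bijective f := by
    constructor
    · intro i j h
      have h1 := congrArg Subtype.val h
      simp only [f] at h1
      obtain ⟨k, -, hk⟩ := hle _ (hidx i)
      rw [hk i le_rfl, hk j h1.le]
    · rintro ⟨H, hH⟩
      obtain ⟨i, hi, -⟩ := hle H hH.1
      refine ⟨i, Subtype.ext ?_⟩
      symm
      apply Subgroup.eq_of_le_of_card_ge hi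
      rw [hcardH _ hH.1, hcardH _ (hidx i)]
  rw [← Nat.card_congr (Equiv.ofBijective f hf)]
  simp

lemma card_CF_perm : Nat.card {H : Subgroup (Equiv.Perm (Fin 4)) // CF H} = 4 := by
  rw [← card_CF_congr (Subgroup.topEquiv (G := Equiv.Perm (Fin 4)))]
  refine card_CF_perm_aux ⊤ (fun i j => ⟨Equiv.swap i j, trivial, by simp⟩) 6 ?_ (Or.inr rfl)
  rw [Nat.card_congr Subgroup.topEquiv.toEquiv]
  simp [Nat.card_eq_fintype_card, Fintype.card_perm, Nat.factorial]

lemma card_A4 : Nat.card (alternatingGroup (Fin 4)) = 12 := by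
  have h := (alternatingGroup (Fin 4)).card_mul_index
  have h24 : Nat.card (Equiv.Perm (Fin 4)) = 24 := by
    simp [Nat.card_eq_fintype_card, Fintype.card_perm, Nat.factorial]
  rw [alternatingGroup.index_eq_two, h24] at h
  omega

lemma card_CF_alt : Nat.card {H : Subgroup (alternatingGroup (Fin 4)) // CF H} = 4 := by
  refine card_CF_perm_aux _ ?_ 3 (by rw [card_A4]) (Or.inl rfl)
  simp only [Equiv.Perm.mem_alternatingGroup]
  decide

lemma CF_fixing_iff {F Ω : Type*} [Field F] [Field Ω] [Algebra F Ω] [Normal F Ω]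
    (K : IntermediateField F Ω) [FiniteDimensional F K] [IsGalois F K]
    (E : IntermediateField F K) :
    CF E.fixingSubgroup ↔ Module.finrank F (IntermediateField.lift E) = 4 ∧
      IntermediateField.normalClosure F (IntermediateField.lift E) Ω = K := by
  have hfr : Module.finrank F (IntermediateField.lift E) = E.fixingSubgroup.index := by
    rw [← IntermediateField.finrank_eq_fixingSubgroup_index]
    exact (IntermediateField.liftAlgEquiv E).toLinearEquiv.finrank_eq.symm
  unfold CF
  rw [hfr]
  refine and_congr_right fun _ => ⟨fun h => ?_, fun h => ?_⟩
  · have hNK : IntermediateField.normalClosure F (IntermediateField.lift E) Ω ≤ K :=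
      (IntermediateField.normalClosure_le_iff_of_normal).2 (IntermediateField.lift_le E)
    obtain ⟨N, hN⟩ : ∃ N, N = IntermediateField.restrict hNK := ⟨_, rfl⟩
    have hl : IntermediateField.lift N = _ := hN ▸ IntermediateField.lift_restrict hNK
    have : Normal F N := by
      rw [hN]
      exact Normal.of_algEquiv (IntermediateField.restrictAlgEquiv hNK)
    have : IsGalois F N := { }
    have hEN : E ≤ N := by
      intro x hx
      rw [hN, IntermediateField.mem_restrict]
      exact IntermediateField.le_normalClosure _ ((IntermediateField.mem_lift x).2 hx)
    have hnorm : N.fixingSubgroup.Normal := inferInstance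
    have hbot : N.fixingSubgroup = ⊥ := (Subgroup.eq_bot_iff_forall _).2 fun x hx =>
      h x fun g => IntermediateField.fixingSubgroup_le hEN (hnorm.conj_mem x hx g)
    have htop : N = ⊤ := by
      rw [← IsGalois.fixedField_fixingSubgroup N, hbot, IntermediateField.fixedField_bot]
    rw [← hl, htop, IntermediateField.lift_top]
  · intro x hx
    have hxC : x ∈ E.fixingSubgroup.normalCore := hx
    obtain ⟨C, hC⟩ : ∃ C, C = IntermediateField.fixedField E.fixingSubgroup.normalCore := ⟨_, rfl⟩
    have hEC : E ≤ C := by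
      rw [hC, IntermediateField.le_iff_le]
      exact Subgroup.normalCore_le _
    have hCn : Normal F C := by
      rw [hC]; exact IsGalois.to_normal
    have : Normal F (IntermediateField.lift C) :=
      Normal.of_algEquiv (IntermediateField.liftAlgEquiv C)
    have h1 : K ≤ IntermediateField.lift C := by
      conv_lhs => rw [← h]
      exact (IntermediateField.normalClosure_le_iff_of_normal).2
        (IntermediateField.map_mono _ hEC)
    have h2 : C = ⊤ := by
      apply IntermediateField.lift_injective K
      rw [IntermediateField.lift_top]
      exact le_antisymm (IntermediateField.lift_le C) h1
    have h3 : E.fixingSubgroup.normalCore = ⊥ := by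
      rw [← IntermediateField.fixingSubgroup_fixedField E.fixingSubgroup.normalCore, ← hC, h2,
        IntermediateField.fixingSubgroup_top]
    rw [h3] at hxC
    exact hxC

lemma card_fiber {F Ω : Type*} [Field F] [Field Ω] [Algebra F Ω] [Normal F Ω]
    (K : IntermediateField F Ω) [FiniteDimensional F K] [IsGalois F K] :
    Nat.card {L : IntermediateField F Ω // Module.finrank F L = 4 ∧
      IntermediateField.normalClosure F L Ω = K} =
    Nat.card {H : Subgroup (K ≃ₐ[F] K) // CF H} := by
  symm
  let f : {H : Subgroup (K ≃ₐ[F] K) // CF H} → {L : IntermediateField F Ω //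
      Module.finrank F L = 4 ∧ IntermediateField.normalClosure F L Ω = K} := fun H =>
    ⟨IntermediateField.lift (IntermediateField.fixedField H.1),
      (CF_fixing_iff K _).1 (by rw [IntermediateField.fixingSubgroup_fixedField]; exact H.2)⟩
  refine Nat.card_congr (Equiv.ofBijective f ⟨?_, ?_⟩)
  · intro H H' h
    have h1 := IntermediateField.lift_injective K (congrArg Subtype.val h)
    apply Subtype.ext
    rw [← IntermediateField.fixingSubgroup_fixedField H.1, h1,
      IntermediateField.fixingSubgroup_fixedField]
  · rintro ⟨L, hL⟩
    have hLK : L ≤ K := hL.2 ▸ IntermediateField.le_normalClosure L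
    have hl := IntermediateField.lift_restrict hLK
    refine ⟨⟨(IntermediateField.restrict hLK).fixingSubgroup, (CF_fixing_iff K _).2 ?_⟩, ?_⟩
    · rw [hl]; exact hL
    · apply Subtype.ext
      simp only [f]
      rw [IsGalois.fixedField_fixingSubgroup, hl]


/-- `K/F` is finite Galois with group isomorphic to `G`. -/
def HasGal (F : Type*) [Field F] (G : Type*) [Group G]
    (K : IntermediateField F (AlgebraicClosure F)) : Prop :=
  FiniteDimensional F K ∧ IsGalois F K ∧ Nonempty ((K ≃ₐ[F] K) ≃* G)

/-- Quartic subfields whose normal closure has group `G`. -/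
def quarticsOf (F : Type*) [Field F] (G : Type*) [Group G] :
    Set (IntermediateField F (AlgebraicClosure F)) :=
  {L | Module.finrank F L = 4 ∧
    HasGal F G (IntermediateField.normalClosure F L (AlgebraicClosure F))}

lemma ncard_quarticsOf (F : Type*) [Field F] (G : Type*) [Group G]
    (hG : Nat.card {H : Subgroup G // CF H} = 4) :
    (quarticsOf F G).ncard = 4 * nu F G := by
  have hfib : ∀ K : {K // HasGal F G K},
      Nonempty ({L : IntermediateField F (AlgebraicClosure F) // Module.finrank F L = 4 ∧
        IntermediateField.normalClosure F L (AlgebraicClosure F) = K.1} ≃ Fin 4) := by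
    rintro ⟨K, hfd, hgal, ⟨e⟩⟩
    have h4 := (card_fiber K).trans ((card_CF_congr e).trans hG)
    have := Nat.finite_of_card_ne_zero (by rw [h4]; norm_num)
    exact ⟨Finite.equivFinOfCardEq h4⟩
  let e1 : quarticsOf F G ≃ Σ K : {K // HasGal F G K},
      {L : IntermediateField F (AlgebraicClosure F) // Module.finrank F L = 4 ∧
        IntermediateField.normalClosure F L (AlgebraicClosure F) = K.1} :=
    { toFun := fun L => ⟨⟨_, L.2.2⟩, ⟨L.1, L.2.1, rfl⟩⟩
      invFun := fun x => ⟨x.2.1, x.2.2.1, by rw [x.2.2.2]; exact x.1.2⟩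
      left_inv := fun L => rfl
      right_inv := by
        rintro ⟨⟨K, hK⟩, ⟨L, hL, h⟩⟩
        change IntermediateField.normalClosure F L (AlgebraicClosure F) = K at h
        subst h
        rfl }
  let e2 : quarticsOf F G ≃ {K // HasGal F G K} × Fin 4 :=
    e1.trans ((Equiv.sigmaCongrRight fun K => (hfib K).some).trans (Equiv.sigmaEquivProd _ _))
  rw [← Nat.card_coe_set_eq, Nat.card_congr e2, Nat.card_prod, mul_comm]
  simp [nu, HasGal]

lemma HasGal.finrank {F : Type*} [Field F] {G : Type*} [Group G]
    {K : IntermediateField F (AlgebraicClosure F)} (h : HasGal F G K) :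
    Module.finrank F K = Nat.card G := by
  obtain ⟨h1, h2, ⟨e⟩⟩ := h
  rw [← Nat.card_congr e.toEquiv]
  exact (IsGalois.card_aut_eq_finrank F K).symm

lemma disjoint_quarticsOf (F : Type*) [Field F] (G G' : Type*) [Group G] [Group G']
    (h : Nat.card G ≠ Nat.card G') : Disjoint (quarticsOf F G) (quarticsOf F G') := by
  rw [Set.disjoint_left]
  intro L h1 h2
  exact h (h1.2.finrank.symm.trans h2.2.finrank)

lemma disjoint_ab_quarticsOf (F : Type*) [Field F] (G : Type*) [Group G]
    (h : Nat.card G ≠ 4) : Disjoint {L : IntermediateField F (AlgebraicClosure F) |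
        Module.finrank F L = 4 ∧ IsGalois F L ∧
          ∀ σ τ : L ≃ₐ[F] L, σ * τ = τ * σ} (quarticsOf F G) := by
  rw [Set.disjoint_left]
  rintro L ⟨h1, h2, -⟩ h3
  have h4 := h3.2.finrank
  rw [IntermediateField.normalClosure_of_normal, h1] at h4
  exact h h4.symm

lemma quartics_eq (F : Type*) [Field F] [CharZero F] :
    {L : IntermediateField F (AlgebraicClosure F) | Module.finrank F L = 4} =
      (({L : IntermediateField F (AlgebraicClosure F) |
        Module.finrank F L = 4 ∧ IsGalois F L ∧
          ∀ σ τ : L ≃ₐ[F] L, σ * τ = τ * σ} ∪ quarticsOf F (DihedralGroup 4)) ∪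
      quarticsOf F (alternatingGroup (Fin 4))) ∪ quarticsOf F (Equiv.Perm (Fin 4)) := by
  ext L
  constructor
  · intro hL
    have hL : Module.finrank F L = 4 := hL
    have : FiniteDimensional F L := FiniteDimensional.of_finrank_pos (by omega)
    obtain ⟨K, hK⟩ : ∃ K, K = IntermediateField.normalClosure F L (AlgebraicClosure F) := ⟨_, rfl⟩
    have hfd : FiniteDimensional F K := by rw [hK]; infer_instance
    have hn : Normal F K := by rw [hK]; infer_instance
    have hg : IsGalois F K := { }
    have hLK : L ≤ K := hK ▸ IntermediateField.le_normalClosure L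
    have hCF : CF (IntermediateField.restrict hLK).fixingSubgroup := by
      rw [CF_fixing_iff, IntermediateField.lift_restrict]
      exact ⟨hL, hK.symm⟩
    rcases classify _ hCF with h | h | h | h
    · left; left; left
      have h4 : Module.finrank F K = 4 := by
        rw [← IsGalois.card_aut_eq_finrank]; exact h
      have hE : L = K := IntermediateField.eq_of_le_of_finrank_eq hLK (by rw [hL, h4])
      subst hE
      refine ⟨hL, hg, fun σ τ => ?_⟩
      have : Fact (Nat.Prime 2) := ⟨Nat.prime_two⟩
      have := IsPGroup.isMulCommutative_of_card_eq_prime_sq (p := 2) (G := L ≃ₐ[F] L)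
        (by rw [h]; norm_num)
      exact this.is_comm.comm σ τ
    · left; left; right
      exact ⟨hL, hK ▸ ⟨hfd, hg, h⟩⟩
    · left; right
      exact ⟨hL, hK ▸ ⟨hfd, hg, h⟩⟩
    · right
      exact ⟨hL, hK ▸ ⟨hfd, hg, h⟩⟩
  · rintro (((h | h) | h) | h) <;> exact h.1

/-- `DihedralGroup 4` is the dihedral group of order 8 (a 2-Sylow subgroup of `S₄`). -/
theorem stmt13 (p : ℕ) [Fact p.Prime]
    (F : Type*) [Field F] [Algebra ℚ_[p] F] [FiniteDimensional ℚ_[p] F] :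
    Nat.card {L : IntermediateField F (AlgebraicClosure F) // Module.finrank F L = 4} =
      Nat.card {L : IntermediateField F (AlgebraicClosure F) //
        Module.finrank F L = 4 ∧ IsGalois F L ∧
          ∀ σ τ : L ≃ₐ[F] L, σ * τ = τ * σ} +
      4 * nu F (DihedralGroup 4) +
      4 * nu F (alternatingGroup (Fin 4)) +
      4 * nu F (Equiv.Perm (Fin 4)) := by
  have : CharZero F := charZero_of_injective_algebraMap (algebraMap ℚ_[p] F).injective
  have hfin : {L : IntermediateField F (AlgebraicClosure F) | Module.finrank F L = 4}.Finite :=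
    finite_quartic p F
  have heq := quartics_eq F
  have hD : Nat.card (DihedralGroup 4) = 8 := by rw [DihedralGroup.nat_card]
  have hA := card_A4
  have hS : Nat.card (Equiv.Perm (Fin 4)) = 24 := by
    simp [Nat.card_eq_fintype_card, Fintype.card_perm, Nat.factorial]
  rw [← ncard_quarticsOf F _ card_CF_dih, ← ncard_quarticsOf F _ card_CF_alt,
    ← ncard_quarticsOf F _ card_CF_perm]
  change Set.ncard {L : IntermediateField F (AlgebraicClosure F) | Module.finrank F L = 4} =
    Set.ncard {L : IntermediateField F (AlgebraicClosure F) |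
        Module.finrank F L = 4 ∧ IsGalois F L ∧
          ∀ σ τ : L ≃ₐ[F] L, σ * τ = τ * σ} + _ + _ + _
  rw [heq] at hfin ⊢
  have f1 := hfin.subset Set.subset_union_left
  have f2 := f1.subset Set.subset_union_left
  rw [Set.ncard_union_eq _ f1 (hfin.subset Set.subset_union_right),
    Set.ncard_union_eq _ f2 (f1.subset Set.subset_union_right),
    Set.ncard_union_eq _ (f2.subset Set.subset_union_left) (f2.subset Set.subset_union_right)]
  · exact disjoint_ab_quarticsOf F _ (by omega)
  · rw [Set.disjoint_union_left]
    exact ⟨disjoint_ab_quarticsOf F _ (by omega), disjoint_quarticsOf F _ _ (by omega)⟩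
  · rw [Set.disjoint_union_left, Set.disjoint_union_left]
    exact ⟨⟨disjoint_ab_quarticsOf F _ (by omega), disjoint_quarticsOf F _ _ (by omega)⟩,
      disjoint_quarticsOf F _ _ (by omega)⟩
end

section
/- Let F be a finite extension of ℚ₂ and let F'/F be a Galois extension of degree 3 with Gal(F'/F) generated by σ. Let x ∈ F'^* be such that the class of x in F'^*/(F'^*)² does not lie in the image of F^*/(F^*)² and such that N_{F'/F}(x) is a square in F^*. Then F'(√x, √(σx)) is a Galois extension of F with Galois group isomorphic to the alternating group A₄ (namely (ℤ/2ℤ × ℤ/2ℤ) ⋊ ℤ/3ℤ). -/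
open IntermediateField

section Helpers

/-- The four conjugates of `s + t + u`. -/
def thetaFn {R : Type*} [CommRing R] (s t u : R) : Fin 4 → R :=
  ![s + t + u, s - t - u, -s + t - u, -s - t + u]

lemma thetaFn_core {R : Type*} [Field R] [CharZero R] {s t u w a b c : R} (hw : w ≠ 0)
    (h1 : s * t * u = w) (h2 : a * b * c = w) (ha : a ^ 2 = s ^ 2) (hb : b ^ 2 = t ^ 2)
    (hc : c ^ 2 = u ^ 2) (i : Fin 4) : ∃ j, thetaFn a b c i = thetaFn s t u j := by
  have key' : -w = w → False := fun h => hw (by linear_combination -h / 2)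
  rcases sq_eq_sq_iff_eq_or_eq_neg.mp ha with rfl | rfl <;>
  rcases sq_eq_sq_iff_eq_or_eq_neg.mp hb with rfl | rfl <;>
  rcases sq_eq_sq_iff_eq_or_eq_neg.mp hc with rfl | rfl <;>
  first
  | (exfalso; apply key'; rw [← h2]; linear_combination h1 - h2)
  | (exfalso; apply key'; linear_combination h2 - 2 * h1 + h1)
  | (exfalso; apply key'; linear_combination h2 + h1)
  | (fin_cases i <;> first
      | (refine ⟨0, ?_⟩; simp [thetaFn] <;> ring1)
      | (refine ⟨1, ?_⟩; simp [thetaFn] <;> ring1)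
      | (refine ⟨2, ?_⟩; simp [thetaFn] <;> ring1)
      | (refine ⟨3, ?_⟩; simp [thetaFn] <;> ring1))

lemma thetaFn_rot {R : Type*} [CommRing R] (s t u : R) (i : Fin 4) :
    ∃ j, thetaFn t u s i = thetaFn s t u j := by
  fin_cases i <;> first
      | (refine ⟨0, ?_⟩; simp [thetaFn] <;> ring1)
      | (refine ⟨1, ?_⟩; simp [thetaFn] <;> ring1)
      | (refine ⟨2, ?_⟩; simp [thetaFn] <;> ring1)
      | (refine ⟨3, ?_⟩; simp [thetaFn] <;> ring1)

lemma thetaFn_perm {R : Type*} [Field R] [CharZero R] {s t u w a b c : R} (hw : w ≠ 0)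
    (h1 : s * t * u = w) (h2 : a * b * c = w)
    (h : (a ^ 2 = s ^ 2 ∧ b ^ 2 = t ^ 2 ∧ c ^ 2 = u ^ 2) ∨
      (a ^ 2 = t ^ 2 ∧ b ^ 2 = u ^ 2 ∧ c ^ 2 = s ^ 2) ∨
      (a ^ 2 = u ^ 2 ∧ b ^ 2 = s ^ 2 ∧ c ^ 2 = t ^ 2)) (i : Fin 4) :
    ∃ j, thetaFn a b c i = thetaFn s t u j := by
  rcases h with ⟨ha, hb, hc⟩ | ⟨ha, hb, hc⟩ | ⟨ha, hb, hc⟩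
  · exact thetaFn_core hw h1 h2 ha hb hc i
  · obtain ⟨j, hj⟩ := thetaFn_core (s := t) (t := u) (u := s) hw (by rw [← h1]; ring) h2 ha hb hc i
    obtain ⟨k, hk⟩ := thetaFn_rot s t u j
    exact ⟨k, hj.trans hk⟩
  · obtain ⟨j, hj⟩ := thetaFn_core (s := u) (t := s) (u := t) hw (by rw [← h1]; ring) h2 ha hb hc i
    obtain ⟨k, hk⟩ := thetaFn_rot t u s j
    obtain ⟨l, hl⟩ := thetaFn_rot s t u k
    exact ⟨l, hj.trans (hk.trans hl)⟩

lemma thetaFn_inj {R : Type*} [Field R] [CharZero R] {s t u : R} (h1 : s ^ 2 ≠ t ^ 2)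
    (h2 : t ^ 2 ≠ u ^ 2) (h3 : u ^ 2 ≠ s ^ 2) : Function.Injective (thetaFn s t u) := by
  have a1 : s - t ≠ 0 := fun h => h1 (by linear_combination (s + t) * h)
  have a2 : s + t ≠ 0 := fun h => h1 (by linear_combination (s - t) * h)
  have a3 : t - u ≠ 0 := fun h => h2 (by linear_combination (t + u) * h)
  have a4 : t + u ≠ 0 := fun h => h2 (by linear_combination (t - u) * h)
  have a5 : u - s ≠ 0 := fun h => h3 (by linear_combination (u + s) * h)
  have a6 : u + s ≠ 0 := fun h => h3 (by linear_combination (u - s) * h)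
  intro i j hij
  fin_cases i <;> fin_cases j <;> simp [thetaFn] at hij ⊢ <;> first
    | exact a1 (by linear_combination hij / 2)
    | exact a1 (by linear_combination -hij / 2)
    | exact a2 (by linear_combination hij / 2)
    | exact a2 (by linear_combination -hij / 2)
    | exact a3 (by linear_combination hij / 2)
    | exact a3 (by linear_combination -hij / 2)
    | exact a4 (by linear_combination hij / 2)
    | exact a4 (by linear_combination -hij / 2)
    | exact a5 (by linear_combination hij / 2)
    | exact a5 (by linear_combination -hij / 2)
    | exact a6 (by linear_combination hij / 2)
    | exact a6 (by linear_combination -hij / 2)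

/-- A group acting on a set, stabilizing and faithful on four points, of order 12, is `A₄`. -/
lemma equiv_alternating {G α : Type*} [Group G] [MulAction G α] (θ : Fin 4 → α)
    (hθ : Function.Injective θ) (hst : ∀ (g : G) i, ∃ j, g • θ i = θ j)
    (hf : ∀ g : G, (∀ i, g • θ i = θ i) → g = 1) (hcard : Nat.card G = 12) :
    Nonempty (G ≃* alternatingGroup (Fin 4)) := by
  choose p hp using hst
  let φ₀ : G →* Function.End (Fin 4) :=
    { toFun := fun g => p g
      map_one' := by
        funext i
        apply hθ
        rw [← hp, one_smul]
        rfl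
      map_mul' := by
        intro g h
        funext i
        apply hθ
        rw [← hp, mul_smul, hp, hp]
        rfl }
  let φ : G →* Equiv.Perm (Fin 4) := φ₀.toHomPerm
  have hφ : ∀ g i, φ g i = p g i := fun g i => rfl
  have hinj : Function.Injective φ := by
    rw [injective_iff_map_eq_one]
    intro g hg
    apply hf
    intro i
    rw [hp, ← hφ, hg]
    rfl
  have hr : Nat.card φ.range = 12 := by
    rw [← hcard]
    exact (Nat.card_congr (MonoidHom.ofInjective hinj).toEquiv).symm
  have hidx : φ.range.index = 2 := by
    have h := φ.range.card_mul_index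
    rw [hr, Nat.card_perm, Nat.card_fin] at h
    have : Nat.factorial 4 = 24 := rfl
    omega
  have heq := Equiv.Perm.eq_alternatingGroup_of_index_eq_two hidx
  exact ⟨(MonoidHom.ofInjective hinj).trans (MulEquiv.subgroupCongr heq)⟩

lemma quad_minpoly {L Ω : Type*} [Field L] [Field Ω] [Algebra L Ω] {a : L} {s : Ω}
    (hs : s ^ 2 = algebraMap L Ω a) (hn : ∀ b : L, b ^ 2 ≠ a) :
    minpoly L s = Polynomial.X ^ 2 - Polynomial.C a := by
  symm
  apply minpoly.eq_of_irreducible_of_monic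
  · exact X_pow_sub_C_irreducible_of_prime Nat.prime_two hn
  · simp [hs]
  · exact Polynomial.monic_X_pow_sub_C a two_ne_zero

lemma quad_finrank {L Ω : Type*} [Field L] [Field Ω] [Algebra L Ω] {a : L} {s : Ω}
    (hs : s ^ 2 = algebraMap L Ω a) (hn : ∀ b : L, b ^ 2 ≠ a) :
    Module.finrank L L⟮s⟯ = 2 := by
  have hint : IsIntegral L s := ⟨Polynomial.X ^ 2 - Polynomial.C a,
    Polynomial.monic_X_pow_sub_C a two_ne_zero, by simp [hs]⟩
  rw [adjoin.finrank hint, quad_minpoly hs hn, Polynomial.natDegree_X_pow_sub_C]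

lemma quad_mem_s15 {L Ω : Type*} [Field L] [Field Ω] [Algebra L Ω] {a : L} {s : Ω}
    (hs : s ^ 2 = algebraMap L Ω a) (hn : ∀ b : L, b ^ 2 ≠ a) {y : Ω} (hy : y ∈ L⟮s⟯) :
    ∃ b c : L, y = algebraMap L Ω b + algebraMap L Ω c * s := by
  have hint : IsIntegral L s := ⟨Polynomial.X ^ 2 - Polynomial.C a,
    Polynomial.monic_X_pow_sub_C a two_ne_zero, by simp [hs]⟩
  obtain ⟨f, hf, hy'⟩ := (adjoin.powerBasis hint).exists_eq_aeval ⟨y, hy⟩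
  rw [adjoin.powerBasis_dim, quad_minpoly hs hn, Polynomial.natDegree_X_pow_sub_C] at hf
  have h2 := congrArg (algebraMap L⟮s⟯ Ω) hy'
  rw [adjoin.powerBasis_gen, ← Polynomial.aeval_algebraMap_apply,
    AdjoinSimple.algebraMap_gen] at h2
  obtain ⟨c, b, rfl⟩ := Polynomial.exists_eq_X_add_C_of_natDegree_le_one (show f.natDegree ≤ 1 by omega)
  refine ⟨b, c, ?_⟩
  have h3 : algebraMap L⟮s⟯ Ω ⟨y, hy⟩ = y := rfl
  rw [h3] at h2
  rw [h2]
  simp [add_comm]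

lemma quad_relfinrank {F Ω : Type*} [Field F] [Field Ω] [Algebra F Ω]
    (E : IntermediateField F Ω) {s : Ω} (hs : s ^ 2 ∈ E) (hn : s ∉ E) :
    E.relfinrank (E ⊔ F⟮s⟯) = 2 := by
  rw [relfinrank_eq_finrank_of_le le_sup_left]
  have h : extendScalars (le_sup_left : E ≤ E ⊔ F⟮s⟯) = E⟮s⟯ := by
    apply restrictScalars_injective F
    rw [restrictScalars_adjoin_eq_sup, extendScalars_restrictScalars]
  rw [h]
  apply quad_finrank (a := ⟨s ^ 2, hs⟩) rfl
  intro b hb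
  have hb' : (b : Ω) ^ 2 = s ^ 2 := congrArg Subtype.val hb
  rcases sq_eq_sq_iff_eq_or_eq_neg.mp hb' with h | h
  · exact hn (h ▸ b.2)
  · apply hn
    rw [← neg_neg s, ← h]
    exact E.neg_mem b.2

lemma quad_mem' {F Ω : Type*} [Field F] [Field Ω] [Algebra F Ω]
    (E : IntermediateField F Ω) {s : Ω} (hs : s ^ 2 ∈ E) (hn : s ∉ E) {y : Ω}
    (hy : y ∈ E ⊔ F⟮s⟯) : ∃ b c : E, y = b + c * s := by
  rw [← restrictScalars_adjoin_eq_sup] at hy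
  refine quad_mem_s15 (a := (⟨s ^ 2, hs⟩ : E)) rfl ?_ hy
  intro b hb
  have hb' : (b : Ω) ^ 2 = s ^ 2 := congrArg Subtype.val hb
  rcases sq_eq_sq_iff_eq_or_eq_neg.mp hb' with h | h
  · exact hn (h ▸ b.2)
  · apply hn
    rw [← neg_neg s, ← h]
    exact E.neg_mem b.2

/-- Biquadratic degree. -/
lemma biquad_relfinrank {F Ω : Type*} [Field F] [Field Ω] [CharZero Ω] [Algebra F Ω]
    (E : IntermediateField F Ω) {s t : Ω} (hs : s ^ 2 ∈ E) (ht : t ^ 2 ∈ E)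
    (hsn : s ∉ E) (htn : t ∉ E) (hst : s * t ∉ E) :
    E.relfinrank (E ⊔ F⟮s⟯ ⊔ F⟮t⟯) = 4 := by
  rw [← relfinrank_mul_relfinrank (le_sup_left : E ≤ E ⊔ F⟮s⟯) le_sup_left,
    quad_relfinrank E hs hsn, quad_relfinrank (E ⊔ F⟮s⟯) ((le_sup_left : E ≤ E ⊔ F⟮s⟯) ht)]
  intro h
  obtain ⟨b, c, hbc⟩ := quad_mem' E hs hsn h
  by_cases hc : c = 0
  · apply htn
    rw [hbc, hc]
    simp
  by_cases hb : b = 0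
  · apply hst
    rw [hbc, hb]
    have : s * (((0 : E) : Ω) + c * s) = c * s ^ 2 := by push_cast; ring
    rw [this]
    exact E.mul_mem c.2 hs
  · apply hsn
    have hb' : (b : Ω) ≠ 0 := by simpa using hb
    have hc' : (c : Ω) ≠ 0 := by simpa using hc
    have h2 : (2 : Ω) ≠ 0 := two_ne_zero
    have : s = (t ^ 2 - b ^ 2 - c ^ 2 * s ^ 2) / (2 * b * c) := by
      rw [eq_div_iff (by simp [hb', hc'])]
      rw [hbc]
      ring
    rw [this]
    refine E.div_mem (E.sub_mem (E.sub_mem ht (pow_mem b.2 2))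
      (E.mul_mem (pow_mem c.2 2) hs)) (E.mul_mem (E.mul_mem ?_ b.2) c.2)
    exact_mod_cast E.natCast_mem 2

end Helpers

/-- `F'(√x, √(σx))` is an `A₄`-extension of `F`, where everything is viewed inside a
fixed algebraic closure `Ω` of `F`, `F'` being a degree-3 Galois intermediate field. -/
theorem stmt15 (F : Type*) [Field F] [Algebra ℚ_[2] F] [FiniteDimensional ℚ_[2] F]
    (F' : IntermediateField F (AlgebraicClosure F))
    [IsGalois F F'] (hdeg : Module.finrank F F' = 3)
    (σ : F' ≃ₐ[F] F') (hσ : ∀ τ : F' ≃ₐ[F] F', τ ∈ Subgroup.zpowers σ)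
    (x : F') (hx0 : x ≠ 0)
    -- the class of `x` in `F'^*/(F'^*)²` is not in the image of `F^*/(F^*)²` :
    (hx : ¬ ∃ (y : F) (z : F'), x = algebraMap F F' y * z ^ 2)
    -- the norm of `x` is a square in `F^*` :
    (hnorm : ∃ w : F, Algebra.norm F x = w ^ 2)
    -- square roots of `x` and `σ x` in the algebraic closure :
    (s t : AlgebraicClosure F) (hs : s ^ 2 = (x : AlgebraicClosure F))
    (ht : t ^ 2 = ((σ x : F') : AlgebraicClosure F)) :
    letI K : IntermediateField F (AlgebraicClosure F) :=
      IntermediateField.adjoin F ((F' : Set (AlgebraicClosure F)) ∪ {s, t})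
    IsGalois F K ∧ Nonempty ((K ≃ₐ[F] K) ≃* alternatingGroup (Fin 4)) := by
  have : CharZero F := charZero_of_injective_algebraMap (algebraMap ℚ_[2] F).injective
  have : FiniteDimensional F F' := Module.finite_of_finrank_pos (by omega)
  have : CharZero (AlgebraicClosure F) :=
    charZero_of_injective_algebraMap (algebraMap F (AlgebraicClosure F)).injective
  obtain ⟨w, hw⟩ := hnorm
  -- the group
  have hcardG : Nat.card (F' ≃ₐ[F] F') = 3 := by rw [IsGalois.card_aut_eq_finrank, hdeg]
  have hord : orderOf σ = 3 := by
    rw [← hcardG]; exact orderOf_eq_card_of_forall_mem_zpowers hσ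
  have hσ3 : σ ^ 3 = 1 := hord ▸ pow_orderOf_eq_one σ
  have hτ : ∀ τ : F' ≃ₐ[F] F', τ = 1 ∨ τ = σ ∨ τ = σ ^ 2 := by
    intro τ
    classical
    have h := hσ τ
    rw [(isOfFinOrder_of_finite σ).mem_zpowers_iff_mem_range_orderOf, hord] at h
    obtain ⟨n, hn, rfl⟩ := Finset.mem_image.mp h
    have hn := Finset.mem_range.mp hn
    interval_cases n <;> simp
  have hσ1 : σ ≠ 1 := by
    rintro rfl
    simp at hord
  have hσ2 : σ ^ 2 ≠ 1 := by
    intro h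
    have := orderOf_dvd_of_pow_eq_one h
    rw [hord] at this
    omega
  have hσ12 : σ ≠ σ ^ 2 := by
    intro h
    apply hσ1
    have : σ * 1 = σ * σ := by rw [mul_one, ← pow_two]; exact h
    exact (mul_left_cancel this).symm
  have hσσσ : σ (σ (σ x)) = x := by
    have := congrArg (fun τ : F' ≃ₐ[F] F' => τ x) hσ3
    simpa [pow_succ] using this
  have hprod : x * σ x * σ (σ x) = algebraMap F F' w ^ 2 := by
    classical
    have h := Algebra.norm_eq_prod_automorphisms F x
    have hu : (Finset.univ : Finset (F' ≃ₐ[F] F')) = {1, σ, σ ^ 2} := by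
      ext τ
      simpa using hτ τ
    rw [hu, Finset.prod_insert (by simp [hσ1.symm, hσ2.symm]), Finset.prod_insert (by simpa using hσ12),
      Finset.prod_singleton, hw] at h
    rw [← map_pow, h]
    simp [pow_succ, mul_assoc]
  -- fixed points
  have hfix : σ x ≠ x := by
    intro h
    have hb : x ∈ (⊥ : IntermediateField F F') := by
      rw [IsGalois.mem_bot_iff_fixed]
      intro τ
      rcases hτ τ with rfl | rfl | rfl <;> simp [pow_succ, h]
    obtain ⟨y, hy⟩ := IntermediateField.mem_bot.mp hb
    exact hx ⟨y, 1, by rw [hy]; ring⟩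
  have hfix2 : σ (σ x) ≠ σ x := fun h => hfix (σ.injective h)
  have hfix3 : x ≠ σ (σ x) := by
    intro h
    apply hfix2
    have := congrArg σ h
    rw [hσσσ] at this
    rw [← h, this]
  have hnsq : ∀ z : F', z ^ 2 ≠ x := fun z hz => hx ⟨1, z, by simp [hz]⟩
  have hnsq1 : ∀ z : F', z ^ 2 ≠ σ x := by
    intro z hz
    apply hnsq (σ (σ z))
    rw [← map_pow, ← map_pow, hz, hσσσ]
  have hnsq2 : ∀ z : F', z ^ 2 ≠ σ (σ x) := by
    intro z hz
    apply hnsq (σ z)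
    rw [← map_pow, hz, hσσσ]
  have hσx0 : σ x ≠ 0 := by simpa using hx0
  have hσσx0 : σ (σ x) ≠ 0 := by simpa using hx0
  have hw0 : w ≠ 0 := by
    rintro rfl
    simp [hx0] at hprod
  set W : AlgebraicClosure F := algebraMap F (AlgebraicClosure F) w with hW
  have hW0 : W ≠ 0 := by simpa [hW] using hw0
  have hs0 : s ≠ 0 := by
    rintro rfl
    apply hx0
    apply Subtype.val_injective
    simpa using hs.symm
  have ht0 : t ≠ 0 := by
    rintro rfl
    apply hσx0
    apply Subtype.val_injective
    simpa using ht.symm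
  have hprod' : (x : AlgebraicClosure F) * (σ x : F') * (σ (σ x) : F') = W ^ 2 := by
    have := congrArg (algebraMap F' (AlgebraicClosure F)) hprod
    rw [map_mul, map_mul, map_pow, ← IsScalarTower.algebraMap_apply] at this
    exact this
  obtain ⟨u, hu⟩ : ∃ u, u = W / (s * t) := ⟨_, rfl⟩
  have hstu : s * t * u = W := by rw [hu]; field_simp
  have hu2 : u ^ 2 = ((σ (σ x) : F') : AlgebraicClosure F) := by
    rw [hu, div_pow, mul_pow, hs, ht, ← hprod', div_eq_iff]
    · ring
    · rw [← hs, ← ht]; positivity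
  -- membership
  have hsF : s ∉ F' := fun h => hnsq ⟨s, h⟩ (Subtype.val_injective (by simpa using hs))
  have htF : t ∉ F' := fun h => hnsq1 ⟨t, h⟩ (Subtype.val_injective (by simpa using ht))
  have huF : u ∉ F' := fun h => hnsq2 ⟨u, h⟩ (Subtype.val_injective (by simpa using hu2))
  have hWF : W ∈ F' := F'.algebraMap_mem w
  have hstF : s * t ∉ F' := by
    intro h
    apply huF
    rw [hu]
    exact F'.div_mem hWF h
  set K : IntermediateField F (AlgebraicClosure F) :=
    IntermediateField.adjoin F ((F' : Set (AlgebraicClosure F)) ∪ {s, t}) with hK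
  have hF'K : F' ≤ K := fun y hy => subset_adjoin F _ (Or.inl hy)
  have hsK : s ∈ K := subset_adjoin F _ (Or.inr (by simp))
  have htK : t ∈ K := subset_adjoin F _ (Or.inr (by simp))
  have huK : u ∈ K := by
    rw [hu]
    exact K.div_mem (hF'K hWF) (K.mul_mem hsK htK)
  have hKeq : K = F' ⊔ F⟮s⟯ ⊔ F⟮t⟯ := by
    change adjoin F _ = _
    rw [adjoin_union, adjoin_self, sup_assoc, ← adjoin_union]
    rfl
  have hrank : Module.finrank F K = 12 := by
    have h4 : F'.relfinrank K = 4 := by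
      rw [hKeq]
      exact biquad_relfinrank F' (hs ▸ x.2) (ht ▸ (σ x).2) hsF htF hstF
    rw [← relfinrank_bot_left, ← relfinrank_mul_relfinrank bot_le hF'K, h4, relfinrank_bot_left,
      hdeg]
  have : FiniteDimensional F K := Module.finite_of_finrank_pos (by omega)
  -- embeddings of the cubic field
  have hhom : ∀ f : F' →ₐ[F] AlgebraicClosure F, ∃ τ : F' ≃ₐ[F] F', ∀ y, f y = (τ y : F') := by
    intro f
    refine ⟨f.restrictNormal' F', fun y => ?_⟩
    exact (AlgHom.restrictNormal_commutes f F' y).symm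
  have hcyc : ∀ f : F' →ₐ[F] AlgebraicClosure F,
      (f x = s ^ 2 ∧ f (σ x) = t ^ 2 ∧ f (σ (σ x)) = u ^ 2) ∨
      (f x = t ^ 2 ∧ f (σ x) = u ^ 2 ∧ f (σ (σ x)) = s ^ 2) ∨
      (f x = u ^ 2 ∧ f (σ x) = s ^ 2 ∧ f (σ (σ x)) = t ^ 2) := by
    intro f
    obtain ⟨τ, hf⟩ := hhom f
    simp only [hf, hs, ht, hu2]
    rcases hτ τ with rfl | rfl | rfl
    · left; simp
    · right; left; simp [hσσσ]
    · right; right; simp [pow_succ, hσσσ]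
  have hnormal : Normal F K := by
    rw [normal_iff_forall_map_le]
    intro f
    have hmem : ∀ {a b : AlgebraicClosure F}, a ^ 2 = b ^ 2 → b ∈ K → a ∈ K := by
      intro a b hab hb
      rcases sq_eq_sq_iff_eq_or_eq_neg.mp hab with rfl | rfl
      · exact hb
      · exact K.neg_mem hb
    have hfs : f s ^ 2 = (f.comp F'.val) x := by rw [← map_pow, hs]; rfl
    have hft : f t ^ 2 = (f.comp F'.val) (σ x) := by rw [← map_pow, ht]; rfl
    rw [IntermediateField.map_le_iff_le_comap]
    change adjoin F _ ≤ _
    rw [adjoin_le_iff]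
    rintro y (hy | rfl | rfl)
    · obtain ⟨τ, h⟩ := hhom (f.comp F'.val)
      have := h ⟨y, hy⟩
      change f y ∈ K
      change f y = _ at this
      rw [this]
      exact hF'K (τ ⟨y, hy⟩).2
    · change f y ∈ K
      rcases hcyc (f.comp F'.val) with h | h | h
      · exact hmem (hfs.trans h.1) hsK
      · exact hmem (hfs.trans h.1) htK
      · exact hmem (hfs.trans h.1) huK
    · change f y ∈ K
      rcases hcyc (f.comp F'.val) with h | h | h
      · exact hmem (hft.trans h.2.1) htK
      · exact hmem (hft.trans h.2.1) huK
      · exact hmem (hft.trans h.2.1) hsK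
  have hgal : IsGalois F K := { }
  refine ⟨hgal, ?_⟩
  have hcard : Nat.card (K ≃ₐ[F] K) = 12 := by rw [IsGalois.card_aut_eq_finrank, hrank]
  have : CharZero K := charZero_of_injective_algebraMap (algebraMap F K).injective
  have hsq1 : s ^ 2 ≠ t ^ 2 := by
    rw [hs, ht]; exact fun h => hfix (Subtype.val_injective h).symm
  have hsq2 : t ^ 2 ≠ u ^ 2 := by
    rw [ht, hu2]; exact fun h => hfix2 (Subtype.val_injective h).symm
  have hsq3 : u ^ 2 ≠ s ^ 2 := by
    rw [hu2, hs]; exact fun h => hfix3 (Subtype.val_injective h).symm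
  obtain ⟨s', hs'⟩ : ∃ s' : K, (s' : AlgebraicClosure F) = s := ⟨⟨s, hsK⟩, rfl⟩
  obtain ⟨t', ht'⟩ : ∃ t' : K, (t' : AlgebraicClosure F) = t := ⟨⟨t, htK⟩, rfl⟩
  obtain ⟨u', hu'⟩ : ∃ u' : K, (u' : AlgebraicClosure F) = u := ⟨⟨u, huK⟩, rfl⟩
  let ι : F' →ₐ[F] K := inclusion hF'K
  have hιv : ∀ y, ((ι y : K) : AlgebraicClosure F) = y := fun y => rfl
  have hs'2 : s' ^ 2 = ι x := Subtype.val_injective (by push_cast; rw [hs', hs, hιv])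
  have ht'2 : t' ^ 2 = ι (σ x) := Subtype.val_injective (by push_cast; rw [ht', ht, hιv])
  have hu'2 : u' ^ 2 = ι (σ (σ x)) := Subtype.val_injective (by push_cast; rw [hu', hu2, hιv])
  have hstu' : s' * t' * u' = algebraMap F K w :=
    Subtype.val_injective (by push_cast; rw [hs', ht', hu', hstu])
  have hmapθ : ∀ (g : K ≃ₐ[F] K) i, g (thetaFn s' t' u' i) = thetaFn (g s') (g t') (g u') i := by
    intro g i
    fin_cases i <;> simp [thetaFn]
  have hcoe : ∀ {a b : K}, (a : AlgebraicClosure F) = b → a = b := fun h => Subtype.val_injective h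
  refine equiv_alternating (G := K ≃ₐ[F] K) (α := K) (thetaFn s' t' u') ?_ ?_ ?_ hcard
  · apply thetaFn_inj
    · intro h; apply hsq1; rw [← hs', ← ht']; exact_mod_cast congrArg Subtype.val h
    · intro h; apply hsq2; rw [← ht', ← hu']; exact_mod_cast congrArg Subtype.val h
    · intro h; apply hsq3; rw [← hu', ← hs']; exact_mod_cast congrArg Subtype.val h
  · intro g i
    rw [AlgEquiv.smul_def, hmapθ]
    have hw'0 : algebraMap F K w ≠ 0 := by simpa using hw0
    refine thetaFn_perm hw'0 hstu' ?_ ?_ i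
    · rw [← map_mul, ← map_mul, hstu', AlgEquiv.commutes]
    · have h := hcyc ((K.val.comp (g : K →ₐ[F] K)).comp ι)
      have e : ∀ y, ((K.val.comp (g : K →ₐ[F] K)).comp ι) y = ((g (ι y) : K) : AlgebraicClosure F) :=
        fun y => rfl
      simp only [e, ← hs'2, ← ht'2, ← hu'2, map_pow] at h
      rw [← hs', ← ht', ← hu'] at h
      exact_mod_cast h
  · intro g hg
    have h0 := hg 0
    have h1 := hg 1
    have h2 := hg 2
    simp only [AlgEquiv.smul_def, hmapθ] at h0 h1 h2
    simp [thetaFn] at h0 h1 h2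
    have gs : g s' = s' := by linear_combination (h0 + h1) / 2
    have gt : g t' = t' := by linear_combination (h0 + h2) / 2
    obtain ⟨τ, hτf⟩ := hhom ((K.val.comp (g : K →ₐ[F] K)).comp ι)
    have hτx : τ x = x := by
      apply Subtype.val_injective
      rw [← hτf]
      change ((g (ι x) : K) : AlgebraicClosure F) = _
      rw [← hs'2, map_pow, gs, hs'2, hιv]
    have hτ1 : τ = 1 := by
      rcases hτ τ with h | h | h
      · exact h
      · rw [h] at hτx; exact absurd hτx hfix
      · rw [h] at hτx
        exact absurd hτx.symm (by simpa [pow_succ] using hfix3)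
    have hgg : (g : K →ₐ[F] K) = AlgHom.id F K := by
      refine algHom_ext_of_eq_adjoin F hK ?_
      rintro y (hy | hy | hy)
      · apply hcoe
        have := hτf ⟨y, hy⟩
        rw [hτ1] at this
        exact this
      · subst hy
        have e : s' = ⟨y, hsK⟩ := hcoe hs'
        rw [e] at gs
        exact gs
      · have hy : y = t := hy
        subst hy
        have e : t' = ⟨y, htK⟩ := hcoe ht'
        rw [e] at gt
        exact gt
    ext y
    exact congrArg Subtype.val (DFunLike.congr_fun hgg y)
end

section
/- Let F be a finite extension of ℚ₂ of degree m. Then the number of Galois extensions of F with Galois group isomorphic to A₄ × ℤ/2ℤ equals the product of ν(F,A₄) with the number of quadratic extensions of F; explicitly, ν(F, A₄ × ℤ/2ℤ) = (2^{m+2} − 1)·ν(F, A₄). -/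
theorem A4_sq : ∀ a : alternatingGroup (Fin 4), ∃ b c : alternatingGroup (Fin 4),
    a = b * b * (c * c) := by decide +kernel

theorem A4_center : ∀ a : alternatingGroup (Fin 4), (∀ b, b * a = a * b) → a = 1 := by
  decide +kernel

theorem C2_sq : ∀ a : Multiplicative (ZMod 2), a * a = 1 := by decide

abbrev A4 := alternatingGroup (Fin 4)
abbrev C2 := Multiplicative (ZMod 2)

theorem A4_to_C2 (f : A4 →* C2) (a : A4) : f a = 1 := by
  obtain ⟨b, c, rfl⟩ := A4_sq a
  simp only [map_mul, C2_sq, mul_one]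

theorem A4_index_two (H : Subgroup A4) (h : H.index ∣ 2) : H = ⊤ := by
  rcases (Nat.dvd_prime Nat.prime_two).1 h with h | h
  · exact Subgroup.index_eq_one.1 h
  · rw [eq_top_iff]
    intro a _
    obtain ⟨b, c, rfl⟩ := A4_sq a
    exact H.mul_mem (Subgroup.mul_self_mem_of_index_two h b) (Subgroup.mul_self_mem_of_index_two h c)

/-- A surjection of `A₄ × C₂` onto `A₄` has the kernel of the first projection. -/
theorem ker_to_A4 (f : A4 × C2 →* A4) (hf : Function.Surjective f) (x : A4 × C2) :
    f x = 1 ↔ x.1 = 1 := by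
  have h1 : ∀ c : C2, f (1, c) = 1 := by
    intro c
    apply A4_center
    intro b
    obtain ⟨y, rfl⟩ := hf b
    rw [← map_mul, ← map_mul]
    congr 1
    ext1
    · simp
    · simp [mul_comm]
  have h2 : ∀ x : A4 × C2, f x = f (x.1, 1) := by
    intro x
    have : x = (x.1, 1) * (1, x.2) := by ext1 <;> simp
    conv_lhs => rw [this, map_mul, h1, mul_one]
  let g : A4 →* A4 := f.comp (MonoidHom.inl A4 C2)
  have hg : Function.Surjective g := by
    intro b
    obtain ⟨y, rfl⟩ := hf b
    exact ⟨y.1, (h2 y).symm⟩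
  have hg' := Finite.injective_iff_surjective.2 hg
  rw [h2 x]
  exact map_eq_one_iff g hg'

theorem ker_to_C2 (f : A4 × C2 →* C2) (hf : Function.Surjective f) (x : A4 × C2) :
    f x = 1 ↔ x.2 = 1 := by
  have h2 : ∀ x : A4 × C2, f x = f (1, x.2) := by
    intro x
    have : x = (x.1, 1) * (1, x.2) := by ext1 <;> simp
    conv_lhs => rw [this, map_mul]
    have := A4_to_C2 (f.comp (MonoidHom.inl A4 C2)) x.1
    simp only [MonoidHom.comp_apply, MonoidHom.inl_apply] at this
    rw [this, one_mul]
  let g : C2 →* C2 := f.comp (MonoidHom.inr A4 C2)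
  have hg : Function.Surjective g := by
    intro b
    obtain ⟨y, rfl⟩ := hf b
    exact ⟨y.2, (h2 y).symm⟩
  have hg' := Finite.injective_iff_surjective.2 hg
  rw [h2 x]
  exact map_eq_one_iff g hg'

section
variable {G : Type*} [Group G]

theorem factor_surj {A B : Type*} [Group A] [Group B] (χ : G →* A) (φ : G →* B)
    (hχ : Function.Surjective χ) (hφ : Function.Surjective φ) (h : χ.ker ≤ φ.ker) :
    ∃ f : A →* B, Function.Surjective f ∧ ∀ g, φ g = f (χ g) := by
  refine ⟨χ.liftOfSurjective hχ ⟨φ, h⟩, ?_, ?_⟩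
  · intro b
    obtain ⟨g, rfl⟩ := hφ b
    exact ⟨χ g, by simp⟩
  · intro g
    simp

theorem prod_surj (φ : G →* A4) (ψ : G →* C2) (hφ : Function.Surjective φ)
    (hψ : Function.Surjective ψ) : Function.Surjective (φ.prod ψ) := by
  have h1 : ψ.ker.map φ = ⊤ := by
    apply A4_index_two
    refine (Subgroup.index_map_dvd _ hφ).trans ?_
    rw [Subgroup.index_ker]
    rw [MonoidHom.range_eq_top.2 hψ]
    simp
  rintro ⟨a, c⟩
  obtain ⟨g, rfl⟩ := hψ c
  have : (φ g)⁻¹ * a ∈ ψ.ker.map φ := by rw [h1]; trivial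
  obtain ⟨h, hh, e⟩ := this
  have hh' : ψ h = 1 := hh
  refine ⟨g * h, ?_⟩
  ext1
  · simp [e]
  · simp [hh']

theorem ker_det_A4 (χ : G →* A4 × C2) (φ : G →* A4) (hχ : Function.Surjective χ)
    (hφ : Function.Surjective φ) (h : χ.ker ≤ φ.ker) :
    φ.ker = ((MonoidHom.fst A4 C2).comp χ).ker := by
  obtain ⟨f, hf, hf'⟩ := factor_surj χ φ hχ hφ h
  ext g
  simp [MonoidHom.mem_ker, hf', ker_to_A4 f hf]

theorem ker_det_C2 (χ : G →* A4 × C2) (φ : G →* C2) (hχ : Function.Surjective χ)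
    (hφ : Function.Surjective φ) (h : χ.ker ≤ φ.ker) :
    φ.ker = ((MonoidHom.snd A4 C2).comp χ).ker := by
  obtain ⟨f, hf, hf'⟩ := factor_surj χ φ hχ hφ h
  ext g
  simp [MonoidHom.mem_ker, hf', ker_to_C2 f hf]

end

section
variable {F Ω : Type*} [Field F] [Field Ω] [Algebra F Ω] [IsGalois F Ω]

/-- `K` is cut out by a surjection of the Galois group onto `A`. -/
def Cut (A : Type*) [Group A] (K : IntermediateField F Ω) : Prop :=
  ∃ χ : (Ω ≃ₐ[F] Ω) →* A, Function.Surjective χ ∧ χ.ker = K.fixingSubgroup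

theorem cut_iff (A : Type*) [Group A] [Finite A] (K : IntermediateField F Ω) :
    (FiniteDimensional F K ∧ IsGalois F K ∧ Nonempty ((K ≃ₐ[F] K) ≃* A)) ↔ Cut A K := by
  constructor
  · rintro ⟨h1, h2, ⟨e⟩⟩
    refine ⟨e.toMonoidHom.comp (AlgEquiv.restrictNormalHom K), ?_, ?_⟩
    · exact e.surjective.comp (AlgEquiv.restrictNormalHom_surjective Ω)
    · rw [← IntermediateField.restrictNormalHom_ker]
      ext g
      simp [MonoidHom.mem_ker]
  · rintro ⟨χ, h1, h2⟩
    have hn : K.fixingSubgroup.Normal := by rw [← h2]; infer_instance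
    have hG := (InfiniteGalois.normal_iff_isGalois K).1 hn
    have hfi : K.fixingSubgroup.FiniteIndex := by
      rw [← h2]; infer_instance
    have hop : IsOpen (K.fixingSubgroup : Set (Ω ≃ₐ[F] Ω)) :=
      K.fixingSubgroup.isOpen_of_isClosed_of_finiteIndex (InfiniteGalois.fixingSubgroup_isClosed K)
    refine ⟨(InfiniteGalois.isOpen_iff_finite K).1 hop, hG, ?_⟩
    have e1 := QuotientGroup.quotientKerEquivOfSurjective χ h1
    have e2 := QuotientGroup.quotientKerEquivOfSurjective
      (AlgEquiv.restrictNormalHom (F := F) (K₁ := Ω) K) (AlgEquiv.restrictNormalHom_surjective Ω)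
    have e3 := QuotientGroup.quotientMulEquivOfEq
      (show χ.ker = (AlgEquiv.restrictNormalHom (F := F) (K₁ := Ω) K).ker by
        rw [h2, IntermediateField.restrictNormalHom_ker])
    exact ⟨e2.symm.trans (e3.symm.trans e1)⟩

theorem quad_iff (K : IntermediateField F Ω) :
    Module.finrank F K = 2 ↔ Cut C2 K := by
  rw [← cut_iff]
  constructor
  · intro h
    have : Algebra.IsQuadraticExtension F K := ⟨h⟩
    refine ⟨inferInstance, inferInstance, ?_⟩
    refine ⟨mulEquivOfPrimeCardEq (p := 2) ?_ ?_⟩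
    · rw [IsGalois.card_aut_eq_finrank, h]
    · simp
  · rintro ⟨h1, h2, ⟨e⟩⟩
    rw [← IsGalois.card_aut_eq_finrank, Nat.card_congr e.toEquiv]
    simp

theorem fix_inj {K L : IntermediateField F Ω} (h : K.fixingSubgroup = L.fixingSubgroup) :
    K = L := by
  rw [← InfiniteGalois.fixedField_fixingSubgroup K, h, InfiniteGalois.fixedField_fixingSubgroup]

theorem exists_field (K : IntermediateField F Ω) [FiniteDimensional F K]
    (H : Subgroup (Ω ≃ₐ[F] Ω)) (h : K.fixingSubgroup ≤ H) :
    ∃ M : IntermediateField F Ω, M.fixingSubgroup = H := by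
  have h1 : IsOpen (K.fixingSubgroup : Set (Ω ≃ₐ[F] Ω)) := IntermediateField.fixingSubgroup_isOpen K
  have h2 : IsOpen (H : Set (Ω ≃ₐ[F] Ω)) := Subgroup.isOpen_mono h h1
  have h3 : IsClosed (H : Set (Ω ≃ₐ[F] Ω)) := Subgroup.isClosed_of_isOpen H h2
  exact ⟨IntermediateField.fixedField H, InfiniteGalois.fixingSubgroup_fixedField ⟨H, h3⟩⟩

theorem cut_sup {M L : IntermediateField F Ω} {φ : (Ω ≃ₐ[F] Ω) →* A4} {ψ : (Ω ≃ₐ[F] Ω) →* C2}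
    (h1 : φ.ker = M.fixingSubgroup) (h2 : ψ.ker = L.fixingSubgroup) :
    (φ.prod ψ).ker = (M ⊔ L).fixingSubgroup := by
  rw [IntermediateField.fixingSubgroup_sup, ← h1, ← h2]
  ext g
  simp [MonoidHom.mem_ker]

theorem card_cut : Nat.card {K : IntermediateField F Ω // Cut (A4 × C2) K} =
    Nat.card {K : IntermediateField F Ω // Cut C2 K} *
    Nat.card {K : IntermediateField F Ω // Cut A4 K} := by
  rw [← Nat.card_prod]
  symm
  refine Nat.card_congr (Equiv.ofBijective
    (fun p => ⟨p.2.1 ⊔ p.1.1, ?_⟩) ⟨?_, ?_⟩)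
  · obtain ⟨⟨L, ψ, hψ, hL⟩, ⟨M, φ, hφ, hM⟩⟩ := p
    exact ⟨φ.prod ψ, prod_surj φ ψ hφ hψ, cut_sup hM hL⟩
  · rintro ⟨⟨L, ψ, hψ, hL⟩, ⟨M, φ, hφ, hM⟩⟩ ⟨⟨L', ψ', hψ', hL'⟩, ⟨M', φ', hφ', hM'⟩⟩ h
    simp only [Subtype.mk.injEq] at h
    have k := cut_sup hM hL
    have k' := cut_sup hM' hL'
    rw [← h] at k'
    have s := prod_surj φ ψ hφ hψ
    have hh : (φ.prod ψ).ker = (φ'.prod ψ').ker := k.trans k'.symm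
    have e1 : φ'.ker = φ.ker := by
      refine ker_det_A4 (φ.prod ψ) φ' s hφ' ?_
      rw [hh]
      intro g hg
      simp only [MonoidHom.mem_ker, MonoidHom.prod_apply, Prod.mk_eq_one] at hg
      exact hg.1
    have e2 : ψ'.ker = ψ.ker := by
      refine ker_det_C2 (φ.prod ψ) ψ' s hψ' ?_
      rw [hh]
      intro g hg
      simp only [MonoidHom.mem_ker, MonoidHom.prod_apply, Prod.mk_eq_one] at hg
      exact hg.2
    have e3 : M = M' := fix_inj (by rw [← hM, ← hM', e1])
    have e4 : L = L' := fix_inj (by rw [← hL, ← hL', e2])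
    subst e3 e4
    rfl
  · rintro ⟨K, hK⟩
    have hfd := ((cut_iff _ K).2 hK).1
    obtain ⟨χ, hχ, hk⟩ := hK
    obtain ⟨M, hM⟩ := exists_field K ((MonoidHom.fst A4 C2).comp χ).ker (by
      rw [← hk]; intro g hg
      rw [MonoidHom.mem_ker] at hg ⊢
      simp [hg])
    obtain ⟨L, hL⟩ := exists_field K ((MonoidHom.snd A4 C2).comp χ).ker (by
      rw [← hk]; intro g hg
      rw [MonoidHom.mem_ker] at hg ⊢
      simp [hg])
    refine ⟨⟨⟨L, _, Prod.snd_surjective.comp hχ, hL.symm⟩,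
      ⟨M, _, Prod.fst_surjective.comp hχ, hM.symm⟩⟩, ?_⟩
    apply Subtype.ext
    apply fix_inj
    rw [← cut_sup hM.symm hL.symm, ← hk]
    ext g
    simp [MonoidHom.mem_ker, Prod.ext_iff]

end
section
variable {F : Type*} [Field F] (v : AbsoluteValue F ℝ)

/-- The subgroup `1 + {x | v x ≤ r}` of units. -/
def ballUnits (hv : IsNonarchimedean v) (r : ℝ) (hr : 0 ≤ r) (hr1 : r < 1) : Subgroup Fˣ where
  carrier := {u | v ((u : F) - 1) ≤ r}
  one_mem' := by simpa using hr
  mul_mem' := by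
    intro a b ha hb
    simp only [Set.mem_ofPred_eq] at ha hb ⊢
    have e : ((a * b : Fˣ) : F) - 1 = ((a : F) - 1) * ((b : F) - 1) + (((a : F) - 1) + ((b : F) - 1)) := by
      push_cast; ring
    rw [e]
    refine (hv _ _).trans (max_le ?_ ((hv _ _).trans (max_le ha hb)))
    rw [map_mul]
    have := v.nonneg ((b : F) - 1)
    have := v.nonneg ((a : F) - 1)
    nlinarith
  inv_mem' := by
    intro a ha
    simp only [Set.mem_ofPred_eq] at ha ⊢
    have h1 : 1 ≤ v (a : F) := by
      by_contra h
      push Not at h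
      have : v ((a : F) + (-((a : F) - 1))) ≤ max (v (a : F)) (v (-((a : F) - 1))) := hv _ _
      rw [show (a : F) + (-((a : F) - 1)) = 1 by ring, map_one, v.map_neg] at this
      have h3 := max_lt h (ha.trans_lt hr1)
      linarith
    have e : ((a⁻¹ : Fˣ) : F) - 1 = -((a : F) - 1) * (a : F)⁻¹ := by
      push_cast
      field_simp [a.ne_zero]
      ring
    rw [e, map_mul, v.map_neg, map_inv₀]
    have h2 : (v (a : F))⁻¹ ≤ 1 := inv_le_one_of_one_le₀ h1
    have := v.nonneg ((a : F) - 1)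
    have : 0 ≤ (v (a : F))⁻¹ := by positivity
    nlinarith

theorem mem_ballUnits (hv : IsNonarchimedean v) (r : ℝ) (hr : 0 ≤ r) (hr1 : r < 1) (u : Fˣ) :
    u ∈ ballUnits v hv r hr hr1 ↔ v ((u : F) - 1) ≤ r := Iff.rfl

theorem sq_one_iff {a : F} : a ^ 2 = 1 ↔ a = 1 ∨ a = -1 := by
  rw [sq, mul_self_eq_one_iff]

theorem coe_two (O : Subring F) : ((2 : O) : F) = 2 := rfl

theorem ball_index (hv : IsNonarchimedean v) (h2 : v 2 = 1 / 2) (h20 : (2 : F) ≠ 0) (m : ℕ)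
    (O : Subring F) (hO : ∀ x, x ∈ O ↔ v x ≤ 1) (g : O →+ (Fin m → ZMod 2))
    (hg : Function.Surjective g) (hg0 : ∀ x, g x = 0 ↔ ∃ y : O, x = 2 * y) :
    (ballUnits v hv (1 / 8) (by norm_num) (by norm_num)).relIndex
      (ballUnits v hv (1 / 4) (by norm_num) (by norm_num)) = 2 ^ m := by
  set V1 := ballUnits v hv (1 / 4) (by norm_num) (by norm_num) with hV1
  set V2 := ballUnits v hv (1 / 8) (by norm_num) (by norm_num) with hV2
  have h4 : v 4 = 1 / 4 := by
    rw [show (4 : F) = 2 * 2 by norm_num, map_mul, h2]; norm_num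
  have h40 : (4 : F) ≠ 0 := by
    rw [show (4 : F) = 2 * 2 by norm_num]; exact mul_ne_zero h20 h20
  have hmem : ∀ u : V1, ((u : Fˣ) - 1 : F) / 4 ∈ O := by
    intro u
    rw [hO, map_div₀, h4]
    have : v (((u : Fˣ) : F) - 1) ≤ 1 / 4 := u.2
    linarith
  let f : V1 →* Multiplicative (Fin m → ZMod 2) :=
    { toFun := fun u => Multiplicative.ofAdd (g ⟨_, hmem u⟩)
      map_one' := by
        rw [ofAdd_eq_one, hg0]
        refine ⟨0, ?_⟩
        ext
        simp
      map_mul' := by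
        intro a b
        rw [← ofAdd_add]
        congr 1
        rw [← map_add, ← sub_eq_zero, ← map_sub, hg0]
        refine ⟨2 * (⟨_, hmem a⟩ * ⟨_, hmem b⟩), ?_⟩
        ext
        push_cast [coe_two]
        field_simp
        ring }
  have hf : Function.Surjective f := by
    intro w
    obtain ⟨x, hx⟩ := hg (Multiplicative.toAdd w)
    have hx1 : v (x : F) ≤ 1 := (hO _).1 x.2
    have hx2 : v (4 * (x : F)) ≤ 1 / 4 := by rw [map_mul, h4]; linarith
    have hne : 1 + 4 * (x : F) ≠ 0 := by
      intro h
      have : (4 * (x : F)) = -1 := by linear_combination h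
      rw [this, v.map_neg, map_one] at hx2
      norm_num at hx2
    refine ⟨⟨Units.mk0 _ hne, ?_⟩, ?_⟩
    · rw [hV1, mem_ballUnits]
      simpa using hx2
    · have : f ⟨Units.mk0 _ hne, by rw [hV1, mem_ballUnits]; simpa using hx2⟩ =
        Multiplicative.ofAdd (g x) := by
        change Multiplicative.ofAdd (g _) = _
        congr 2
        ext
        simp only [Units.val_mk0]
        field_simp
        ring
      rw [this, hx]
      rfl
  have hk : V2.subgroupOf V1 = f.ker := by
    ext u
    rw [Subgroup.mem_subgroupOf, MonoidHom.mem_ker]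
    change _ ↔ Multiplicative.ofAdd (g _) = 1
    rw [ofAdd_eq_one, hg0, hV2, mem_ballUnits]
    constructor
    · intro h
      refine ⟨⟨((u : Fˣ) - 1 : F) / 8, ?_⟩, ?_⟩
      · rw [hO, show (8 : F) = 2 * 4 by norm_num, map_div₀, map_mul, h2, h4, div_le_iff₀ (by norm_num)]
        linarith
      · ext
        push_cast [coe_two]
        rw [show (8 : F) = 2 * 4 by norm_num]
        field_simp
    · rintro ⟨y, hy⟩
      have hy' := congrArg (fun z : O => (z : F)) hy
      push_cast [coe_two] at hy'
      have : ((u : Fˣ) - 1 : F) = 2 * 4 * y := by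
        field_simp at hy'
        linear_combination hy'
      rw [this, map_mul, map_mul, h2, h4]
      have := (hO _).1 y.2
      linarith
  rw [Subgroup.relIndex, hk, Subgroup.index_ker, MonoidHom.range_eq_top.2 hf, Nat.card_congr
    Subgroup.topEquiv.toEquiv]
  simp

theorem sq_ball (hv : IsNonarchimedean v) (h2 : v 2 = 1 / 2) (h20 : (2 : F) ≠ 0)
    (hens : ∀ y, v y ≤ 1 → ∃ x, v x ≤ 1 ∧ x + 2 * x ^ 2 = y) :
    (ballUnits v hv (1 / 4) (by norm_num) (by norm_num)).map (powMonoidHom 2) =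
      ballUnits v hv (1 / 8) (by norm_num) (by norm_num) := by
  have h4 : v 4 = 1 / 4 := by
    rw [show (4 : F) = 2 * 2 by norm_num, map_mul, h2]; norm_num
  have h40 : (4 : F) ≠ 0 := by
    rw [show (4 : F) = 2 * 2 by norm_num]; exact mul_ne_zero h20 h20
  ext u
  constructor
  · rintro ⟨w, hw, rfl⟩
    have hw : v ((w : F) - 1) ≤ 1 / 4 := hw
    rw [mem_ballUnits]
    have e : ((powMonoidHom 2 w : Fˣ) : F) - 1 = ((w : F) - 1) * ((w : F) - 1) + 2 * ((w : F) - 1) := by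
      simp; ring
    rw [e]
    refine (hv _ _).trans (max_le ?_ ?_)
    · rw [map_mul]
      have := v.nonneg ((w : F) - 1)
      nlinarith
    · rw [map_mul, h2]; linarith
  · intro hu
    rw [mem_ballUnits] at hu
    obtain ⟨x, hx, hx'⟩ := hens (((u : F) - 1) / (2 * 4)) (by
      rw [map_div₀, map_mul, h2, h4, div_le_iff₀ (by norm_num)]; linarith)
    have hx2 : v (4 * (x : F)) ≤ 1 / 4 := by rw [map_mul, h4]; linarith
    have hne : 1 + 4 * (x : F) ≠ 0 := by
      intro h
      have : (4 * (x : F)) = -1 := by linear_combination h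
      rw [this, v.map_neg, map_one] at hx2
      norm_num at hx2
    refine ⟨Units.mk0 _ hne, ?_, ?_⟩
    · change _ ∈ ballUnits v hv _ _ _
      rw [mem_ballUnits]; simpa using hx2
    · ext
      simp only [powMonoidHom_apply, Units.val_pow_eq_pow_val, Units.val_mk0]
      field_simp at hx'
      linear_combination hx'

theorem finite_index (hv : IsNonarchimedean v) (h2 : v 2 = 1 / 2) (h20 : (2 : F) ≠ 0) (m : ℕ)
    (O : Subring F) (hO : ∀ x, x ∈ O ↔ v x ≤ 1) (g : O →+ (Fin m → ZMod 2))
    (hg : Function.Surjective g) (hg0 : ∀ x, g x = 0 ↔ ∃ y : O, x = 2 * y) :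
    (Subgroup.zpowers (Units.mk0 2 h20) ⊔
      (ballUnits v hv (1 / 4) (by norm_num) (by norm_num))).FiniteIndex := by
  classical
  set V1 := ballUnits v hv (1 / 4) (by norm_num) (by norm_num) with hV1
  set t := Units.mk0 (2 : F) h20 with ht
  choose s hs using hg
  have step : ∀ x : O, ∃ w, ∃ y, x = s w + 2 * y := by
    intro x
    have : g (x - s (g x)) = 0 := by rw [map_sub, hs, sub_self]
    obtain ⟨y, hy⟩ := (hg0 _).1 this
    exact ⟨g x, y, by rw [← hy]; ring⟩
  let W := Fin m → ZMod 2
  let r : W × W × W → F := fun w => (s w.1 + 2 * (s w.2.1 + 2 * s w.2.2) : O)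
  let q : W × W × W → Fˣ ⧸ (Subgroup.zpowers t ⊔ V1) := fun w =>
    if h : r w = 0 then 1 else QuotientGroup.mk (Units.mk0 _ h)
  have hq : Function.Surjective q := by
    intro c
    obtain ⟨z, rfl⟩ := QuotientGroup.mk_surjective c
    obtain ⟨n, hn1, hn2⟩ := exists_mem_Ioc_zpow (x := v (z : F)) (y := 2)
      (v.pos z.ne_zero) (by norm_num)
    -- normalise
    let x : Fˣ := z * t ^ (n + 1)
    have hxv : v (x : F) = v (z : F) / 2 ^ (n + 1) := by
      simp only [x, ht, Units.val_mul, Units.val_zpow_eq_zpow_val, Units.val_mk0, map_mul,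
        map_zpow₀, h2]
      rw [one_div, inv_zpow, div_eq_mul_inv]
    have hx1 : v (x : F) ≤ 1 := by
      rw [hxv]; exact div_le_one_of_le₀ hn2 (by positivity)
    have hx2 : 1 / 2 < v (x : F) := by
      rw [hxv, lt_div_iff₀ (by positivity), zpow_add₀ (by norm_num)]
      simp only [zpow_one]
      linarith
    obtain ⟨w0, y0, e0⟩ := step ⟨x, (hO _).2 hx1⟩
    obtain ⟨w1, y1, e1⟩ := step y0
    obtain ⟨w2, y2, e2⟩ := step y1
    have e : (x : F) = r (w0, w1, w2) + 2 * 2 * 2 * (y2 : F) := by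
      have := congrArg (fun z : O => (z : F)) e0
      simp only [e1, e2] at this
      simp only [r]
      push_cast [coe_two] at this ⊢
      rw [this]; ring
    have hy2 := (hO _).1 y2.2
    have hr : v (r (w0, w1, w2) - x) ≤ 1 / 8 := by
      rw [e, show r (w0, w1, w2) - (r (w0, w1, w2) + 2 * 2 * 2 * (y2 : F)) = - (2 * 2 * 2 * (y2 : F)) by ring,
        v.map_neg]
      simp only [map_mul, h2]
      linarith
    have hne : r (w0, w1, w2) ≠ 0 := by
      intro h
      rw [h, zero_sub, v.map_neg] at hr
      linarith
    refine ⟨(w0, w1, w2), ?_⟩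
    simp only [q, dif_neg hne]
    rw [QuotientGroup.eq]
    have hz : (Units.mk0 _ hne)⁻¹ * z = ((t ^ (n + 1)))⁻¹ * (x⁻¹ * Units.mk0 _ hne)⁻¹ := by
      simp only [x]
      rw [mul_inv_rev, inv_inv, mul_comm z, mul_left_comm, inv_mul_cancel_left]
    rw [hz]
    refine Subgroup.mul_mem_sup (inv_mem (Subgroup.zpow_mem _ (Subgroup.mem_zpowers t) _)) (inv_mem ?_)
    rw [hV1, mem_ballUnits]
    have : ((x⁻¹ * Units.mk0 _ hne : Fˣ) : F) - 1 = (r (w0, w1, w2) - x) / x := by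
      rw [sub_div, div_self x.ne_zero]
      push_cast
      field_simp
      simp
    rw [this, map_div₀, div_le_iff₀ (by linarith)]
    linarith
  have : Finite (Fˣ ⧸ (Subgroup.zpowers t ⊔ V1)) := Finite.of_surjective q hq
  exact Subgroup.finiteIndex_of_finite_quotient

theorem sq_index (hv : IsNonarchimedean v) (h2 : v 2 = 1 / 2) (h20 : (2 : F) ≠ 0) (m : ℕ)
    (hens : ∀ y, v y ≤ 1 → ∃ x, v x ≤ 1 ∧ x + 2 * x ^ 2 = y)
    (O : Subring F) (hO : ∀ x, x ∈ O ↔ v x ≤ 1) (g : O →+ (Fin m → ZMod 2))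
    (hg : Function.Surjective g) (hg0 : ∀ x, g x = 0 ↔ ∃ y : O, x = 2 * y) :
    (powMonoidHom 2 : Fˣ →* Fˣ).range.index = 2 ^ (m + 2) := by
  have hfin := finite_index v hv h2 h20 m O hO g hg hg0
  have hball := ball_index v hv h2 h20 m O hO g hg hg0
  have hsq := sq_ball v hv h2 h20 hens
  set V1 := ballUnits v hv (1 / 4) (by norm_num) (by norm_num) with hV1
  set V2 := ballUnits v hv (1 / 8) (by norm_num) (by norm_num) with hV2
  set t := Units.mk0 (2 : F) h20 with ht
  set Z := Subgroup.zpowers t with hZ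
  set sq := (powMonoidHom 2 : Fˣ →* Fˣ) with hsqd
  set Z2 := Z.map sq with hZ2
  have hV21 : V2 ≤ V1 := by
    intro u hu
    rw [hV2, mem_ballUnits] at hu
    rw [hV1, mem_ballUnits]
    linarith
  have htv : ∀ n : ℤ, v ((t ^ n : Fˣ) : F) = (2 ^ n)⁻¹ := by
    intro n
    rw [Units.val_zpow_eq_zpow_val, ht, Units.val_mk0, map_zpow₀, h2, one_div, inv_zpow]
  have hV1v : ∀ u ∈ V1, v (u : F) = 1 := by
    intro u hu
    have hu : v ((u : F) - 1) ≤ 1 / 4 := hu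
    have hui : v (((u⁻¹ : Fˣ) : F) - 1) ≤ 1 / 4 := V1.inv_mem hu
    have key : ∀ w : F, v (w - 1) ≤ 1 / 4 → v w ≤ 1 := by
      intro w hw
      have := hv (w - 1) 1
      rw [sub_add_cancel, map_one] at this
      exact this.trans (max_le (by linarith) le_rfl)
    have k1 := key _ hu
    have k2 := key _ hui
    rw [Units.val_inv_eq_inv_val, map_inv₀] at k2
    have := v.pos u.ne_zero
    have := (inv_le_one₀ this).1 k2
    linarith
  have hn0 : ∀ n : ℤ, v ((t ^ n : Fˣ) : F) = 1 → n = 0 := by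
    intro n hn
    rw [htv, inv_eq_one, zpow_eq_one_iff_right₀ (by norm_num) (by norm_num)] at hn
    exact hn
  have hZV : Z ⊓ V1 = ⊥ := by
    rw [eq_bot_iff]
    rintro u ⟨⟨n, rfl⟩, hu⟩
    have := hn0 n (hV1v _ hu)
    subst this
    simp
  have hZ2Z : Z2 ≤ Z := by
    rintro _ ⟨u, hu, rfl⟩
    exact Z.pow_mem hu 2
  -- index of `Z2` in `Z`
  have hZi : Z2.relIndex Z = 2 := by
    have hinj : Function.Injective (fun n : ℤ => t ^ n) := by
      rw [injective_zpow_iff_not_isOfFinOrder]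
      intro h
      rw [isOfFinOrder_iff_zpow_eq_one] at h
      obtain ⟨n, hn, h⟩ := h
      apply hn
      apply hn0
      rw [h]; simp
    let f : Multiplicative ℤ →* Fˣ := zpowersHom Fˣ t
    have hfi : Function.Injective f := by
      intro a b hab
      exact Multiplicative.toAdd.injective (hinj hab)
    have e1 : Z = (⊤ : Subgroup (Multiplicative ℤ)).map f := by
      rw [← MonoidHom.range_eq_map]
      ext u
      constructor
      · rintro ⟨n, rfl⟩; exact ⟨Multiplicative.ofAdd n, rfl⟩
      · rintro ⟨n, rfl⟩; exact ⟨Multiplicative.toAdd n, rfl⟩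
    have e2 : Z2 = (Subgroup.zpowers (Multiplicative.ofAdd (2 : ℤ))).map f := by
      rw [MonoidHom.map_zpowers, hZ2, hZ, MonoidHom.map_zpowers]
      rfl
    rw [e1, e2, Subgroup.relIndex_map_map_of_injective _ _ hfi, Subgroup.relIndex_top_right]
    have := Int.index_zmultiples 2
    exact this
  set U := Z ⊔ V1 with hU
  have hUsq : U.map sq = Z2 ⊔ V2 := by
    rw [hU, Subgroup.map_sup, hsq]
  have i1 : (Z2 ⊔ V2).relIndex (Z ⊔ V2) = 2 := by
    have : Z ⊔ V2 = Z ⊔ (Z2 ⊔ V2) := by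
      rw [← sup_assoc, sup_eq_left.2 hZ2Z]
    rw [this, Subgroup.relIndex_sup_right, ← Subgroup.inf_relIndex_right]
    have : (Z2 ⊔ V2) ⊓ Z = Z2 := by
      rw [sup_inf_assoc_of_le _ hZ2Z]
      have : V2 ⊓ Z = ⊥ := by
        rw [eq_bot_iff, ← hZV, inf_comm]
        exact inf_le_inf_left _ hV21
      rw [this, sup_bot_eq]
    rw [this, hZi]
  have i2 : (Z ⊔ V2).relIndex U = 2 ^ m := by
    have : U = V1 ⊔ (Z ⊔ V2) := by
      rw [sup_left_comm, sup_eq_left.2 hV21]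
    rw [this, Subgroup.relIndex_sup_right, ← Subgroup.inf_relIndex_right]
    have : (Z ⊔ V2) ⊓ V1 = V2 := by
      rw [sup_comm, sup_inf_assoc_of_le _ hV21, hZV, sup_bot_eq]
    rw [this, hball]
  have i3 : (U.map sq).relIndex U = 2 * 2 ^ m := by
    have := Subgroup.relIndex_mul_relIndex (Z2 ⊔ V2) (Z ⊔ V2) U
      (sup_le_sup_right hZ2Z _) (sup_le_sup_left hV21 _)
    rw [hUsq, ← this, i1, i2]
  have hle : U.map sq ≤ U := by
    rintro _ ⟨u, hu, rfl⟩
    exact U.pow_mem hu 2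
  have i4 := Subgroup.relIndex_mul_index hle
  rw [i3, Subgroup.index_map] at i4
  have hker : Nat.card sq.ker = 2 := by
    have hn : (-1 : Fˣ) ≠ 1 := by
      intro h
      have := congrArg (fun u : Fˣ => (u : F)) h
      simp only [Units.val_neg, Units.val_one] at this
      apply h20
      linear_combination -this
    have : (sq.ker : Set Fˣ) = {1, -1} := by
      ext u
      have : u ∈ sq.ker ↔ (u : F) ^ 2 = 1 := by
        rw [MonoidHom.mem_ker, Units.ext_iff]
        simp only [hsqd, powMonoidHom_apply, Units.val_pow_eq_pow_val, Units.val_one]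
      rw [SetLike.mem_coe, this, sq_one_iff]
      simp only [Set.mem_insert_iff, Set.mem_singleton_iff, Units.ext_iff, Units.val_neg,
        Units.val_one]
    rw [← SetLike.coe_sort_coe, this, Nat.card_coe_set_eq, Set.ncard_pair hn.symm]
  have hinf : U ⊓ sq.ker = ⊥ := by
    rw [eq_bot_iff]
    rintro u ⟨hu, hk⟩
    have hk : u ^ 2 = 1 := hk
    obtain ⟨z, ⟨n, rfl⟩, w, hw, rfl⟩ := Subgroup.mem_sup.1 hu
    have hvk := congrArg (fun u : Fˣ => v (u : F)) hk
    simp only [Units.val_pow_eq_pow_val, Units.val_mul, map_pow, map_mul, Units.val_one, map_one,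
      hV1v w hw, mul_one] at hvk
    have : v ((t ^ n : Fˣ) : F) = 1 := by
      rwa [pow_eq_one_iff_of_nonneg (v.nonneg _) (by norm_num)] at hvk
    have := hn0 n this
    subst this
    simp only [zpow_zero, one_mul] at hk ⊢
    have hw' : v ((w : F) - 1) ≤ 1 / 4 := hw
    have hk' : (w : F) ^ 2 = 1 := by
      rw [← Units.val_pow_eq_pow_val, hk, Units.val_one]
    rcases sq_one_iff.1 hk' with h | h
    · rw [Subgroup.mem_bot]; ext; simpa using h
    · rw [h, show (-1 - 1 : F) = - 2 by ring, v.map_neg, h2] at hw'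
      norm_num at hw'
  have i5 : U.index = 2 * (U ⊔ sq.ker).index := by
    rw [← Subgroup.relIndex_mul_index (le_sup_left : U ≤ U ⊔ sq.ker), sup_comm,
      Subgroup.relIndex_sup_right, ← Subgroup.inf_relIndex_right, hinf, Subgroup.relIndex_bot_left,
      hker]
  have hne : U.index ≠ 0 := hfin.index_ne_zero
  rw [i5] at i4 hne
  have hpos : 0 < (U ⊔ sq.ker).index := by omega
  apply Nat.eq_of_mul_eq_mul_left hpos
  rw [← i4]
  ring
end
theorem hensel_normed {F : Type*} [NormedField F] [CompleteSpace F] (hv : IsNonarchimedean (norm : F → ℝ))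
    (h2 : ‖(2 : F)‖ = 1 / 2) (y : F) (hy : ‖y‖ ≤ 1) : ∃ x : F, ‖x‖ ≤ 1 ∧ x + 2 * x ^ 2 = y := by
  let f : F → F := fun x => y - 2 * x ^ 2
  have hs : IsComplete (Metric.closedBall (0 : F) 1) := Metric.isClosed_closedBall.isComplete
  have hm : Set.MapsTo f (Metric.closedBall 0 1) (Metric.closedBall 0 1) := by
    intro x hx
    rw [mem_closedBall_zero_iff] at hx ⊢
    simp only [f]
    rw [sub_eq_add_neg]
    refine (hv _ _).trans (max_le hy ?_)
    rw [norm_neg, norm_mul, norm_pow, h2]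
    have := norm_nonneg x
    nlinarith
  have hc : ContractingWith (1 / 2) (hm.restrict f _ _) := by
    refine ⟨by rw [div_lt_one (by norm_num)]; norm_num, LipschitzWith.of_dist_le_mul ?_⟩
    rintro ⟨a, ha⟩ ⟨b, hb⟩
    rw [mem_closedBall_zero_iff] at ha hb
    simp only [Subtype.dist_eq, Set.MapsTo.val_restrict_apply, dist_eq_norm, f]
    rw [show y - 2 * a ^ 2 - (y - 2 * b ^ 2) = 2 * (-(a + b)) * (a - b) by ring, norm_mul, norm_mul,
      h2, norm_neg]
    have h3 : ‖a + b‖ ≤ 1 := (hv a b).trans (max_le ha hb)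
    have := norm_nonneg (a - b)
    push_cast
    nlinarith
  obtain ⟨x, hx, hfx, -⟩ := hc.exists_fixedPoint' hs hm (x := 0) (by simp) (edist_ne_top _ _)
  refine ⟨x, by simpa using hx, ?_⟩
  have : y - 2 * x ^ 2 = x := hfx
  linear_combination -this

theorem lattice_hom {A : Type*} [CommRing A] [Algebra ℤ_[2] A] {m : ℕ}
    (b : Module.Basis (Fin m) ℤ_[2] A) :
    ∃ g : A →+ (Fin m → ZMod 2), Function.Surjective g ∧ ∀ x, g x = 0 ↔ ∃ y, x = 2 * y := by
  refine ⟨((PadicInt.toZMod (p := 2)).toAddMonoidHom.compLeft (Fin m)).comp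
    b.equivFun.toLinearMap.toAddMonoidHom, ?_, ?_⟩
  · intro w
    have hs : ∀ i, ∃ z : ℤ_[2], PadicInt.toZMod z = w i := fun i =>
      ZMod.ringHom_surjective (PadicInt.toZMod (p := 2)) (w i)
    choose z hz using hs
    refine ⟨b.equivFun.symm z, ?_⟩
    ext i
    change PadicInt.toZMod (b.equivFun (b.equivFun.symm z) i) = w i
    rw [LinearEquiv.apply_symm_apply, hz]
  · intro x
    have key : ∀ z : ℤ_[2], PadicInt.toZMod z = 0 ↔ ∃ y, z = 2 * y := by
      intro z
      rw [← RingHom.mem_ker, PadicInt.ker_toZMod, PadicInt.maximalIdeal_eq_span_p,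
        Ideal.mem_span_singleton]
      rfl
    constructor
    · intro h
      have h' : ∀ i, ∃ y, b.equivFun x i = 2 * y := fun i => (key _).1 (congrFun h i)
      choose y hy using h'
      refine ⟨b.equivFun.symm y, b.equivFun.injective ?_⟩
      have : (2 : A) * b.equivFun.symm y = (2 : ℤ_[2]) • b.equivFun.symm y := by
        rw [Algebra.smul_def, map_ofNat]
      rw [this, map_smul, LinearEquiv.apply_symm_apply]
      ext i
      rw [hy]; rfl
    · rintro ⟨y, rfl⟩
      have : (2 : A) * y = (2 : ℤ_[2]) • y := by
        rw [Algebra.smul_def, map_ofNat]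
      ext i
      change PadicInt.toZMod (b.equivFun (2 * y) i) = 0
      rw [key, this, map_smul]
      exact ⟨_, rfl⟩

theorem spectralValue_le_one {p : Polynomial ℚ_[2]} (hp : p.Monic) :
    spectralValue p ≤ 1 ↔ ∀ i, ‖p.coeff i‖ ≤ 1 := by
  have hpos : ∀ i, i < p.natDegree → 0 < 1 / ((p.natDegree : ℝ) - i) := by
    intro i hi
    have : (i : ℝ) < p.natDegree := by exact_mod_cast hi
    apply one_div_pos.2
    linarith
  constructor
  · intro h i
    rcases lt_trichotomy i p.natDegree with hi | hi | hi
    · have h1 := (le_ciSup (spectralValueTerms_bddAbove p) i).trans h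
      rw [spectralValueTerms_of_lt_natDegree p hi] at h1
      by_contra hc
      push Not at hc
      have := Real.one_lt_rpow hc (hpos i hi)
      linarith
    · rw [hi, hp.coeff_natDegree]; simp
    · rw [Polynomial.coeff_eq_zero_of_natDegree_lt hi]; simp
  · intro h
    apply ciSup_le
    intro i
    by_cases hi : i < p.natDegree
    · rw [spectralValueTerms_of_lt_natDegree p hi]
      exact Real.rpow_le_one (norm_nonneg _) (h i) (hpos i hi).le
    · rw [spectralValueTerms_of_natDegree_le p (not_lt.1 hi)]; norm_num

theorem integral_iff {F : Type*} [Field F] [Algebra ℚ_[2] F] [FiniteDimensional ℚ_[2] F]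
    [Algebra ℤ_[2] F] [IsScalarTower ℤ_[2] ℚ_[2] F] (x : F) :
    IsIntegral ℤ_[2] x ↔ spectralNorm ℚ_[2] F x ≤ 1 := by
  have hx : IsIntegral ℚ_[2] x := Algebra.IsIntegral.isIntegral x
  rw [spectralNorm, spectralValue_le_one (minpoly.monic hx)]
  constructor
  · intro h i
    rw [minpoly.isIntegrallyClosed_eq_field_fractions' ℚ_[2] h, Polynomial.coeff_map]
    exact PadicInt.norm_le_one _
  · intro h
    have hl : minpoly ℚ_[2] x ∈ Polynomial.lifts (algebraMap ℤ_[2] ℚ_[2]) := by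
      rw [Polynomial.lifts_iff_coeff_lifts]
      intro i
      exact ⟨⟨_, h i⟩, rfl⟩
    obtain ⟨q, hq, -, hqm⟩ := Polynomial.lifts_and_natDegree_eq_and_monic hl (minpoly.monic hx)
    refine ⟨q, hqm, ?_⟩
    rw [← Polynomial.aeval_def, ← Polynomial.aeval_map_algebraMap ℚ_[2], hq, minpoly.aeval]

theorem sq_index_padic (F : Type*) [Field F] [Algebra ℚ_[2] F] [FiniteDimensional ℚ_[2] F] :
    (powMonoidHom 2 : Fˣ →* Fˣ).range.index = 2 ^ (Module.finrank ℚ_[2] F + 2) := by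
  let : Algebra ℤ_[2] F := ((algebraMap ℚ_[2] F).comp (algebraMap ℤ_[2] ℚ_[2])).toAlgebra
  have : IsScalarTower ℤ_[2] ℚ_[2] F := IsScalarTower.of_algebraMap_eq fun _ => rfl
  have : CharZero F := charZero_of_injective_algebraMap (algebraMap ℚ_[2] F).injective
  let v : AbsoluteValue F ℝ :=
    { toFun := spectralNorm ℚ_[2] F
      map_mul' := fun x y => spectralAlgNorm_mul x y
      nonneg' := spectralNorm_nonneg
      eq_zero' := fun x => map_eq_zero_iff_eq_zero (spectralMulAlgNorm ℚ_[2] F)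
      add_le' := fun x y => isNonarchimedean_spectralNorm.add_le spectralNorm_nonneg }
  have hvd : ∀ x, v x = spectralNorm ℚ_[2] F x := fun _ => rfl
  have hv : IsNonarchimedean v := isNonarchimedean_spectralNorm (K := ℚ_[2]) (L := F)
  have h2 : v 2 = 1 / 2 := by
    rw [hvd, ← map_ofNat (algebraMap ℚ_[2] F) 2, spectralNorm_extends]
    have := Padic.norm_p (p := 2)
    simpa using this
  have hens : ∀ y, v y ≤ 1 → ∃ x, v x ≤ 1 ∧ x + 2 * x ^ 2 = y :=
    @hensel_normed F (spectralNorm.normedField ℚ_[2] F) (spectralNorm.completeSpace ℚ_[2] F) hv h2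
  have : Module.IsTorsionFree ℤ_[2] F := by
    rw [Module.isTorsionFree_iff_algebraMap_injective]
    exact (algebraMap ℚ_[2] F).injective.comp (IsFractionRing.injective ℤ_[2] ℚ_[2])
  have hfree := IsIntegralClosure.module_free ℤ_[2] ℚ_[2] F (integralClosure ℤ_[2] F)
  have hfin := IsIntegralClosure.finite ℤ_[2] ℚ_[2] F (integralClosure ℤ_[2] F)
  have hrank := IsIntegralClosure.rank ℤ_[2] ℚ_[2] F (integralClosure ℤ_[2] F)
  rw [← hrank]
  obtain ⟨g, hg, hg0⟩ := lattice_hom (Module.finBasis ℤ_[2] (integralClosure ℤ_[2] F))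
  exact sq_index v hv h2 two_ne_zero _ hens (integralClosure ℤ_[2] F).toSubring
    (fun x => integral_iff x) g hg hg0
section
open IntermediateField
variable {F Ω : Type*} [Field F] [Field Ω] [Algebra F Ω] [IsGalois F Ω]

theorem adjoin_eq_of_quad {L : IntermediateField F Ω} (hL : Module.finrank F L = 2) {x : Ω}
    (hx : x ∈ L) (hx' : x ∉ (⊥ : IntermediateField F Ω)) : F⟮x⟯ = L := by
  have hfd : FiniteDimensional F L := Module.finite_of_finrank_eq_succ hL
  have hle : F⟮x⟯ ≤ L := adjoin_simple_le_iff.2 hx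
  have hne : Module.finrank F F⟮x⟯ ≠ 1 := by
    rw [Ne, finrank_adjoin_simple_eq_one_iff]; exact hx'
  have hdvd : Module.finrank F F⟮x⟯ ∣ 2 := hL ▸ finrank_dvd_of_le_right hle
  have h2 := ((Nat.dvd_prime Nat.prime_two).1 hdvd).resolve_left hne
  exact eq_of_le_of_finrank_eq hle (h2.trans hL.symm)

theorem mem_bot_sq {s : Ω} {a : F} (h : s ^ 2 = algebraMap F Ω a) (ha : ¬ IsSquare a) :
    s ∉ (⊥ : IntermediateField F Ω) := by
  rintro hs
  obtain ⟨b, rfl⟩ := mem_bot.1 hs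
  apply ha
  refine ⟨b, (algebraMap F Ω).injective ?_⟩
  rw [← h, map_mul, sq]

theorem finrank_adjoin_sq {s : Ω} {a : F} (h : s ^ 2 = algebraMap F Ω a) (ha : ¬ IsSquare a) :
    Module.finrank F F⟮s⟯ = 2 := by
  have hi : IsIntegral F s := Algebra.IsIntegral.isIntegral s
  have hne : Module.finrank F F⟮s⟯ ≠ 1 := by
    rw [Ne, finrank_adjoin_simple_eq_one_iff]; exact mem_bot_sq h ha
  rw [adjoin.finrank hi] at hne ⊢
  have hd : minpoly F s ∣ (Polynomial.X ^ 2 - Polynomial.C a) := by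
    apply minpoly.dvd
    simp [h]
  have hle := Polynomial.natDegree_le_of_dvd hd (Polynomial.X_pow_sub_C_ne_zero (by norm_num) a)
  rw [Polynomial.natDegree_X_pow_sub_C] at hle
  have := minpoly.natDegree_pos hi
  omega

theorem exists_sqrt (h2 : (2 : F) ≠ 0) {L : IntermediateField F Ω} (hL : Module.finrank F L = 2) :
    ∃ (a : Fˣ) (s : Ω), s ^ 2 = algebraMap F Ω a ∧ ¬ IsSquare (a : F) ∧ F⟮s⟯ = L := by
  have hne : L ≠ ⊥ := by
    rintro rfl
    rw [IntermediateField.finrank_bot] at hL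
    norm_num at hL
  obtain ⟨x, hx, hx'⟩ : ∃ x ∈ L, x ∉ (⊥ : IntermediateField F Ω) := by
    by_contra hc
    push Not at hc
    exact hne (le_bot_iff.1 hc)
  have hxL := adjoin_eq_of_quad hL hx hx'
  have hi : IsIntegral F x := Algebra.IsIntegral.isIntegral x
  have hdeg : (minpoly F x).natDegree = 2 := by
    rw [← adjoin.finrank hi, hxL, hL]
  have hae := minpoly.aeval F x
  have hm : (minpoly F x).coeff 2 = 1 := by
    rw [← hdeg]; exact (minpoly.monic hi).coeff_natDegree
  rw [Polynomial.aeval_eq_sum_range, hdeg, Finset.sum_range_succ, Finset.sum_range_succ,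
    Finset.sum_range_succ, hm] at hae
  simp only [Finset.range_zero, Finset.sum_empty, pow_zero, pow_one, Algebra.smul_def,
    map_one, zero_add, mul_one, one_mul] at hae
  set p := (minpoly F x).coeff 0
  set q := (minpoly F x).coeff 1
  have h2' : (2 : Ω) ≠ 0 := by
    rw [← map_ofNat (algebraMap F Ω) 2]
    exact (map_ne_zero _).2 h2
  have h4 : (4 : F) ≠ 0 := by
    rw [show (4 : F) = 2 * 2 by norm_num]; exact mul_ne_zero h2 h2
  have h4' : (4 : Ω) ≠ 0 := by
    rw [show (4 : Ω) = 2 * 2 by norm_num]; exact mul_ne_zero h2' h2'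
  let s : Ω := x + algebraMap F Ω (q / 2)
  have hsL : s ∈ L := L.add_mem hx (L.algebraMap_mem _)
  have hs' : s ∉ (⊥ : IntermediateField F Ω) := by
    intro h
    apply hx'
    have := (⊥ : IntermediateField F Ω).sub_mem h ((⊥ : IntermediateField F Ω).algebraMap_mem (q / 2))
    simpa [s] using this
  have hsq : s ^ 2 = algebraMap F Ω (q ^ 2 / 4 - p) := by
    simp only [s, map_sub, map_div₀, map_pow, map_ofNat]
    field_simp
    linear_combination 16 * hae
  have ha0 : q ^ 2 / 4 - p ≠ 0 := by
    intro h
    rw [h, map_zero] at hsq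
    apply hs'
    rw [pow_eq_zero_iff (by norm_num)] at hsq
    rw [hsq]; exact zero_mem _
  refine ⟨Units.mk0 _ ha0, s, hsq, ?_, adjoin_eq_of_quad hL hsL hs'⟩
  rintro ⟨b, hb⟩
  rw [Units.val_mk0] at hb
  rw [hb, map_mul, ← sq, sq_eq_sq_iff_eq_or_eq_neg] at hsq
  apply hs'
  rcases hsq with h | h
  · rw [h]; exact IntermediateField.algebraMap_mem _ _
  · rw [h]; exact neg_mem (IntermediateField.algebraMap_mem _ _)

theorem aut_sqrt (σ : Ω ≃ₐ[F] Ω) {s : Ω} {a : F} (h : s ^ 2 = algebraMap F Ω a) :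
    σ s = s ∨ σ s = - s := by
  rw [← sq_eq_sq_iff_eq_or_eq_neg, ← map_pow, h, AlgEquiv.commutes]

theorem fix_adjoin (σ : Ω ≃ₐ[F] Ω) {s t : Ω} (h : σ s = s) (ht : t ∈ F⟮s⟯) : σ t = t := by
  have : F⟮s⟯ ≤ fixedField (Subgroup.zpowers σ) := by
    rw [adjoin_simple_le_iff, mem_fixedField_iff]
    intro f hf
    have : Subgroup.zpowers σ ≤ MulAction.stabilizer (Ω ≃ₐ[F] Ω) s := by
      rw [Subgroup.zpowers_le]; exact h
    exact this hf
  exact (mem_fixedField_iff _ _).1 (this ht) σ (Subgroup.mem_zpowers σ)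

theorem same_class (h2 : (2 : F) ≠ 0) {s t : Ω} {a b : Fˣ} (hs : s ^ 2 = algebraMap F Ω a)
    (ht : t ^ 2 = algebraMap F Ω b) (h : F⟮s⟯ = F⟮t⟯) : ∃ c : Fˣ, c ^ 2 = a * b := by
  have h2' : (2 : Ω) ≠ 0 := by
    rw [← map_ofNat (algebraMap F Ω) 2]
    exact (map_ne_zero _).2 h2
  have hs0 : s ≠ 0 := by
    rintro rfl
    rw [zero_pow (by norm_num)] at hs
    exact (map_ne_zero (algebraMap F Ω)).2 a.ne_zero hs.symm
  have hst : s ∈ F⟮t⟯ := h ▸ mem_adjoin_simple_self F s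
  have hts : t ∈ F⟮s⟯ := h ▸ mem_adjoin_simple_self F t
  have hb : s * t ∈ (⊥ : IntermediateField F Ω) := by
    rw [InfiniteGalois.mem_bot_iff_fixed]
    intro σ
    rw [map_mul]
    rcases aut_sqrt σ hs with e | e
    · rw [e, fix_adjoin σ e hts]
    · rcases aut_sqrt σ ht with e' | e'
      · exfalso
        have := fix_adjoin σ e' hst
        rw [e] at this
        have h3 : 2 * s = 0 := by linear_combination -this
        exact (mul_ne_zero h2' hs0) h3
      · rw [e, e']; ring
  obtain ⟨c, hc⟩ := mem_bot.1 hb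
  have hc2 : c ^ 2 = a * b := by
    apply (algebraMap F Ω).injective
    rw [map_pow, hc, map_mul, ← hs, ← ht]; ring
  have hc0 : c ≠ 0 := by
    rintro rfl
    rw [zero_pow (by norm_num)] at hc2
    exact mul_ne_zero a.ne_zero b.ne_zero hc2.symm
  exact ⟨Units.mk0 c hc0, by ext; simpa using hc2⟩

theorem card_quad [IsAlgClosed Ω] (h2 : (2 : F) ≠ 0)
    (hfin : (powMonoidHom 2 : Fˣ →* Fˣ).range.index ≠ 0) :
    Nat.card {L : IntermediateField F Ω // Module.finrank F L = 2} =
      (powMonoidHom 2 : Fˣ →* Fˣ).range.index - 1 := by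
  classical
  set R := (powMonoidHom 2 : Fˣ →* Fˣ).range with hR
  choose a s hs ha hL using
    fun L : {L : IntermediateField F Ω // Module.finrank F L = 2} => exists_sqrt h2 L.2
  have hmem : ∀ u : Fˣ, u ∈ R ↔ ∃ c : Fˣ, c ^ 2 = u := fun u => Iff.rfl
  have hsqR : ∀ u : Fˣ, u ∈ R ↔ IsSquare (u : F) := by
    intro u
    rw [hmem]
    constructor
    · rintro ⟨c, rfl⟩; exact ⟨c, by simp [sq]⟩
    · rintro ⟨c, hc⟩
      have hc0 : c ≠ 0 := by
        rintro rfl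
        exact u.ne_zero (by simpa using hc)
      exact ⟨Units.mk0 c hc0, by ext; simp [hc, sq]⟩
  have hmk : ∀ u w : Fˣ, (∃ c : Fˣ, c ^ 2 = u * w) → (u : Fˣ ⧸ R) = (w : Fˣ ⧸ R) := by
    rintro u w ⟨c, hc⟩
    rw [QuotientGroup.eq, hmem]
    refine ⟨u⁻¹ * c, ?_⟩
    rw [mul_pow, hc, sq]
    group
  have e : {L : IntermediateField F Ω // Module.finrank F L = 2} ≃ {c : Fˣ ⧸ R | c ≠ 1} := by
    refine Equiv.ofBijective (fun L => ⟨(a L : Fˣ ⧸ R), ?_⟩) ⟨?_, ?_⟩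
    · change (a L : Fˣ ⧸ R) ≠ 1
      rw [Ne, QuotientGroup.eq_one_iff, hsqR]
      exact ha L
    · intro L M h
      have h : (a L : Fˣ ⧸ R) = (a M : Fˣ ⧸ R) := congrArg Subtype.val h
      rw [QuotientGroup.eq, hmem] at h
      obtain ⟨c, hc⟩ := h
      have hc' : a M = a L * c ^ 2 := by rw [hc]; group
      have : (s M) ^ 2 = (s L * algebraMap F Ω c) ^ 2 := by
        rw [mul_pow, hs, hs, hc', ← map_pow, ← map_mul]
        push_cast
        rfl
      have hmm : s M ∈ F⟮s L⟯ := by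
        have hk : s L * algebraMap F Ω c ∈ F⟮s L⟯ :=
          mul_mem (mem_adjoin_simple_self F _) (IntermediateField.algebraMap_mem _ _)
        rcases sq_eq_sq_iff_eq_or_eq_neg.1 this with h | h
        · rw [h]; exact hk
        · rw [h]; exact neg_mem hk
      rw [hL L] at hmm
      have := adjoin_eq_of_quad L.2 hmm (mem_bot_sq (hs M) (ha M))
      apply Subtype.ext
      rw [← this, hL M]
    · rintro ⟨c, hc⟩
      obtain ⟨u, rfl⟩ := QuotientGroup.mk_surjective c
      have hc : (u : Fˣ ⧸ R) ≠ 1 := hc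
      rw [Ne, QuotientGroup.eq_one_iff, hsqR] at hc
      obtain ⟨t, ht⟩ := IsAlgClosed.exists_pow_nat_eq (algebraMap F Ω u) (n := 2) (by norm_num)
      refine ⟨⟨F⟮t⟯, finrank_adjoin_sq ht hc⟩, ?_⟩
      apply Subtype.ext
      exact hmk _ _ (same_class h2 (hs _) ht (hL _))
  have hF : Finite (Fˣ ⧸ R) := by
    have : R.FiniteIndex := ⟨hfin⟩
    infer_instance
  have := Fintype.ofFinite (Fˣ ⧸ R)
  rw [Nat.card_congr e, Subgroup.index, Nat.card_eq_fintype_card, Nat.card_eq_fintype_card,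
    Set.card_ne_eq]
end

theorem stmt16 (F : Type*) [Field F] [Algebra ℚ_[2] F] [FiniteDimensional ℚ_[2] F]
    (m : ℕ) (hm : Module.finrank ℚ_[2] F = m) :
    nu F (alternatingGroup (Fin 4) × Multiplicative (ZMod 2)) =
      Nat.card {L : IntermediateField F (AlgebraicClosure F) // Module.finrank F L = 2} *
        nu F (alternatingGroup (Fin 4)) ∧
    nu F (alternatingGroup (Fin 4) × Multiplicative (ZMod 2)) =
      (2 ^ (m + 2) - 1) * nu F (alternatingGroup (Fin 4)) := by
  have : CharZero F := charZero_of_injective_algebraMap (algebraMap ℚ_[2] F).injective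
  have hidx := sq_index_padic F
  have hquad := card_quad (F := F) (Ω := AlgebraicClosure F) two_ne_zero (by
    rw [hidx]; positivity)
  rw [hidx, hm] at hquad
  have h1 : nu F (alternatingGroup (Fin 4) × Multiplicative (ZMod 2)) =
      Nat.card {L : IntermediateField F (AlgebraicClosure F) // Module.finrank F L = 2} *
        nu F (alternatingGroup (Fin 4)) := by
    simp only [nu, cut_iff, quad_iff]
    exact card_cut
  exact ⟨h1, by rw [h1, hquad]⟩
end
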